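/- Every 3-connected nonbipartite graph of minimum degree at least 4 and order at least 6 contains 4 cycles of consecutive lengths. -/

import Mathlib

open SimpleGraph

/-- `G` is `k`-connected: more than `k` vertices, and deleting any set of fewer than
`k` vertices leaves a connected graph. -/
def KConnected {V : Type*} (G : SimpleGraph V) (k : ℕ) : Prop :=
  k < Nat.card V ∧ ∀ S : Set V, S.Finite → S.ncard < k → (G.induce Sᶜ).Connected

/-- `G + xy`: the graph `G` with the edge `xy` added (equal to `G` if already present). -/
def AddEdge {V : Type*} (G : SimpleGraph V) (x y : V) : SimpleGraph V :=
  G ⊔ SimpleGraph.fromEdgeSet {s(x, y)}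

/-- `G` has a cycle of length `n`. -/
def HasCycleLength {V : Type*} (G : SimpleGraph V) (n : ℕ) : Prop :=
  ∃ (v : V) (c : G.Walk v v), c.IsCycle ∧ c.length = n

/-- `G` contains `k` cycles of consecutive lengths. -/
def HasConsecCycles {V : Type*} (G : SimpleGraph V) (k : ℕ) : Prop :=
  ∃ m : ℕ, ∀ i < k, HasCycleLength G (m + i)

section

variable {V : Type*} {G : SimpleGraph V}

/-- `PathIn G S u v n`: there is a path of length `n` from `u` to `v` inside `S`. -/
inductive PathIn (G : SimpleGraph V) : Set V → V → V → ℕ → Prop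
  | nil {S : Set V} {u : V} (hu : u ∈ S) : PathIn G S u u 0
  | cons {S : Set V} {u v w : V} {n : ℕ} (hu : u ∈ S) (h : G.Adj u v)
      (p : PathIn G (S \ {u}) v w n) : PathIn G S u w (n + 1)

namespace PathIn

variable {S T U : Set V} {u v w b : V} {m n : ℕ}

theorem mono (p : PathIn G S u v n) (h : S ⊆ T) : PathIn G T u v n := by
  induction p generalizing T with
  | nil hu => exact .nil (h hu)
  | cons hu ha _ ih => exact .cons (h hu) ha (ih (Set.sdiff_subset_sdiff_left h))

theorem left_mem (p : PathIn G S u v n) : u ∈ S := by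
  cases p <;> assumption

theorem right_mem (p : PathIn G S u v n) : v ∈ S := by
  induction p with
  | nil hu => exact hu
  | cons _ _ _ ih => exact ih.1

theorem append {v' : V} (p : PathIn G S u v m) (q : PathIn G T v' w n) (h : G.Adj v v')
    (hd : Disjoint S T) : PathIn G (S ∪ T) u w (m + n + 1) := by
  induction p with
  | @nil S u hu =>
    have := Set.disjoint_left.1 hd hu
    rw [zero_add]
    refine .cons (.inl hu) h (q.mono fun x hx => ⟨.inr hx, ?_⟩)
    rintro rfl
    exact this hx
  | @cons S u x y k hu ha _ ih =>
    have h1 := Set.disjoint_left.1 hd hu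
    have := ih h (hd.mono_left Set.sdiff_subset)
    rw [show k + 1 + n + 1 = k + n + 1 + 1 by omega]
    refine PathIn.cons (S := S ∪ T) (.inl hu) ha (this.mono ?_)
    rintro y (hy | hy)
    · exact ⟨.inl hy.1, hy.2⟩
    · refine ⟨.inr hy, ?_⟩
      rintro rfl
      exact h1 hy

theorem append_of_subset {v' : V} {R : Set V} (p : PathIn G S u v m) (q : PathIn G T v' w n)
    (h : G.Adj v v') (hd : Disjoint S T) (hS : S ⊆ R) (hT : T ⊆ R) :
    PathIn G R u w (m + n + 1) :=
  (p.append q h hd).mono (Set.union_subset hS hT)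

theorem symm (p : PathIn G S u v n) : PathIn G S v u n := by
  induction p with
  | nil hu => exact .nil hu
  | @cons S u x w n hu ha _ ih =>
    have := ih.append (PathIn.nil (S := {u}) (G := G) rfl) ha.symm Set.disjoint_sdiff_left
    refine this.mono ?_
    rintro y (hy | rfl)
    exacts [hy.1, hu]

theorem toWalk (p : PathIn G S u v n) :
    ∃ q : G.Walk u v, q.IsPath ∧ q.length = n ∧ ∀ x ∈ q.support, x ∈ S := by
  induction p with
  | @nil S u hu => exact ⟨.nil, by simp, rfl, by simpa using hu⟩
  | @cons S u x w n hu ha _ ih =>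
    obtain ⟨q, hq, hl, hs⟩ := ih
    refine ⟨.cons ha q, ?_, by simp [hl], ?_⟩
    · rw [Walk.cons_isPath_iff]
      exact ⟨hq, fun h => (hs u h).2 rfl⟩
    · intro y hy
      rw [Walk.support_cons, List.mem_cons] at hy
      rcases hy with rfl | hy
      exacts [hu, (hs y hy).1]

/-- Either the path avoids `U`, or its part after the last vertex of `U` gives a path. -/
theorem last_visit (p : PathIn G S u b n) (U : Set V) :
    PathIn G (S \ U) u b n ∨ ∃ u' ∈ U, ∃ m, PathIn G ((S \ U) ∪ {u'}) u' b m ∧ u' ∈ S := by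
  induction p with
  | @nil S u hu =>
    by_cases h : u ∈ U
    · exact .inr ⟨u, h, 0, .nil (.inr rfl), hu⟩
    · exact .inl (.nil ⟨hu, h⟩)
  | @cons S u x w n hu ha _ ih =>
    rcases ih with ih | ⟨u', hu', m, ih, h⟩
    · by_cases h : u ∈ U
      · refine .inr ⟨u, h, n + 1, .cons (.inr rfl) ha (ih.mono ?_), hu⟩
        exact fun y hy => ⟨.inl ⟨hy.1.1, hy.2⟩, hy.1.2⟩
      · refine .inl (.cons ⟨hu, h⟩ ha (ih.mono ?_))
        exact fun y hy => ⟨⟨hy.1.1, hy.2⟩, hy.1.2⟩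
    · refine .inr ⟨u', hu', m, ih.mono ?_, h.1⟩
      exact Set.union_subset_union_left _ (Set.sdiff_subset_sdiff_left Set.sdiff_subset)

theorem exists_last (p : PathIn G S u b n) (hu : u ∈ U) :
    ∃ u' ∈ U, ∃ m, PathIn G ((S \ U) ∪ {u'}) u' b m ∧ u' ∈ S := by
  rcases p.last_visit U with h | h
  · exact absurd hu h.left_mem.2
  · exact h

theorem exists_of_adj (p : PathIn G S u b n) (hv : v ∈ S) (h : G.Adj v u) :
    ∃ m, PathIn G S v b m := by
  rcases p.last_visit {v} with q | ⟨u', rfl, m, q, _⟩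
  · exact ⟨n + 1, .cons hv h q⟩
  · refine ⟨m, q.mono ?_⟩
    rintro y (hy | rfl)
    exacts [hy.1, hv]

theorem hasCycleLength {u' v' : V} (p : PathIn G S u v m) (q : PathIn G T u' v' n)
    (hd : Disjoint S T) (hu : G.Adj u u') (hv : G.Adj v v') (hmn : 1 ≤ m + n) :
    HasCycleLength G (m + n + 2) := by
  obtain ⟨r, hr, hl, -⟩ := (p.append q.symm hv hd).toWalk
  refine ⟨u', .cons hu.symm r, ?_, by simp [hl]⟩
  rw [Walk.cons_isCycle_iff]
  refine ⟨hr, fun h => ?_⟩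
  rw [Sym2.eq_swap] at h
  have := hr.length_eq_one_of_mem_edges h
  omega

end PathIn

/-- `T` is closed under adjacency inside `S`. -/
def ClosedIn (G : SimpleGraph V) (T S : Set V) : Prop :=
  ∀ u ∈ T, ∀ v ∈ S, G.Adj u v → v ∈ T

/-- The set `S` induces a (possibly empty) connected subgraph. -/
def Conn (G : SimpleGraph V) (S : Set V) : Prop :=
  ∀ T ⊆ S, T.Nonempty → ClosedIn G T S → T = S

/-- The component of `v` in the subgraph induced by `S`. -/
def comp (G : SimpleGraph V) (S : Set V) (v : V) : Set V :=
  {w | ∃ n, PathIn G S v w n}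

section

variable {S T K : Set V} {u v w t x : V}

theorem comp_subset : comp G S v ⊆ S := fun _ ⟨_, h⟩ => h.right_mem

theorem mem_comp_self (h : v ∈ S) : v ∈ comp G S v := ⟨0, .nil h⟩

theorem comp_closed : ClosedIn G (comp G S v) S := by
  rintro w ⟨n, h⟩ x hx ha
  obtain ⟨m, q⟩ := h.symm.exists_of_adj hx ha.symm
  exact ⟨m, q.symm⟩

theorem ClosedIn.path {n : ℕ} {S' : Set V} (hT : ClosedIn G T S) (p : PathIn G S' u v n)
    (hS : S' ⊆ S) (hu : u ∈ T) : v ∈ T := by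
  induction p with
  | nil _ => exact hu
  | @cons S' u x w n _ ha p ih =>
    exact ih (Set.sdiff_subset.trans hS) (hT u hu x (hS p.left_mem.1) ha)

theorem comp_conn : Conn G (comp G S v) := by
  intro T hT ⟨x, hx⟩ hc
  have key : ∀ {u w n}, PathIn G S u w n → u ∈ T → w ∈ T := by
    intro u w n p hu
    have : ClosedIn G T S := fun y hy z hz ha =>
      hc y hy z (comp_closed y (hT hy) z hz ha) ha
    exact this.path p subset_rfl hu
  refine hT.antisymm fun y hy => ?_
  obtain ⟨n, hn⟩ := hT hx
  obtain ⟨m, hm⟩ := hy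
  exact key hm (key hn.symm hx)

theorem Conn.path (h : Conn G S) (hu : u ∈ S) (hv : v ∈ S) : ∃ n, PathIn G S u v n := by
  have : comp G S u = S := h _ comp_subset ⟨u, mem_comp_self hu⟩ comp_closed
  rw [← this] at hv
  exact hv

theorem conn_singleton : Conn G {v} := by
  intro T hT hne _
  exact hT.antisymm (by obtain ⟨x, hx⟩ := hne; rintro y rfl; rwa [← hT hx])

theorem ClosedIn.sdiff (h : ClosedIn G T S) : ClosedIn G (S \ T) S := by
  intro u hu v hv ha
  exact ⟨hv, fun hvT => hu.2 (h v hvT u hu.1 ha.symm)⟩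

/-- A connected set stays connected after adding vertices that have a neighbour in it. -/
theorem Conn.union {Y : Set V} (h : Conn G S)
    (hY : ∀ y ∈ Y, ∃ x ∈ S, G.Adj y x) : Conn G (S ∪ Y) := by
  intro T hT ⟨t, ht⟩ hc
  have h1 : (T ∩ S).Nonempty := by
    rcases hT ht with h' | h'
    · exact ⟨t, ht, h'⟩
    · obtain ⟨x, hx, ha⟩ := hY t h'
      exact ⟨x, hc t ht x (.inl hx) ha, hx⟩
  have h2 : T ∩ S = S := h _ Set.inter_subset_right h1
    fun a ha b hb hab => ⟨hc a ha.1 b (.inl hb) hab, hb⟩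
  have h3 : S ⊆ T := fun x hx => (h2.symm ▸ hx : x ∈ T ∩ S).1
  refine hT.antisymm (Set.union_subset h3 fun y hy => ?_)
  obtain ⟨x, hx, ha⟩ := hY y hy
  exact hc x (h3 hx) y (.inr hy) ha.symm

theorem Conn.insert (h : Conn G S) (hy : ∃ x ∈ S, G.Adj v x) :
    Conn G (insert v S) := by
  rw [Set.insert_eq, Set.union_comm]
  exact h.union (by rintro y rfl; exact hy)

theorem Conn.sdiff (h : Conn G S) (ht : t ∈ S) (hK : K ⊆ S \ {t})
    (hc : ClosedIn G K (S \ {t})) : Conn G (S \ K) := by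
  have htK : t ∉ K := fun h' => (hK h').2 rfl
  intro T hT hne hTc
  by_cases htT : t ∈ T
  · have : T ∪ K = S := by
      refine h _ (Set.union_subset (hT.trans Set.sdiff_subset) (hK.trans Set.sdiff_subset))
        hne.inl ?_
      rintro u (hu | hu) v hv ha
      · by_cases hvK : v ∈ K
        exacts [.inr hvK, .inl (hTc u hu v ⟨hv, hvK⟩ ha)]
      · by_cases hvt : v = t
        exacts [.inl (hvt ▸ htT), .inr (hc u hu v ⟨hv, hvt⟩ ha)]
    refine hT.antisymm fun x hx => ?_
    rcases (this.symm ▸ hx.1 : x ∈ T ∪ K) with h' | h'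
    exacts [h', absurd h' hx.2]
  · have : T = S := by
      refine h _ (hT.trans Set.sdiff_subset) hne fun u hu v hv ha => ?_
      by_cases hvK : v ∈ K
      · exact absurd (hc v hvK u ⟨(hT hu).1, fun h' => htT (h' ▸ hu)⟩ ha.symm) (hT hu).2
      · exact hTc u hu v ⟨hv, hvK⟩ ha
    exact absurd (this ▸ ht) htT

/-- A proper part of a connected set left after removing `R` is attached to `R`. -/
theorem Conn.exists_adj {R : Set V} (h : Conn G S) (hR : (R ∩ S).Nonempty) (hK : K ⊆ S \ R)
    (hc : ClosedIn G K (S \ R)) (hne : K.Nonempty) : ∃ r ∈ R ∩ S, ∃ x ∈ K, G.Adj r x := by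
  by_contra hcon
  push Not at hcon
  have : K = S := h _ (hK.trans Set.sdiff_subset) hne fun u hu v hv ha =>
    hc u hu v ⟨hv, fun hvt => hcon v ⟨hvt, hv⟩ u hu ha.symm⟩ ha
  obtain ⟨r, h1, h2⟩ := hR
  exact (hK (this ▸ h2)).2 h1

end

/-- `Link G S A B n`: a path of length `n` inside `S` starts in `A` and ends in `B`. -/
def Link (G : SimpleGraph V) (S A B : Set V) (n : ℕ) : Prop :=
  ∃ a ∈ A, ∃ b ∈ B, PathIn G S a b n

open Classical in
/-- The indicator of a set, with natural values. -/
noncomputable def ind (A : Set V) (s : V) : ℕ := if s ∈ A then 1 else 0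

/-- The degree of `s` inside `S`, plus one for each of `A`, `B` containing `s`. -/
noncomputable def cnt (G : SimpleGraph V) (S A B : Set V) (s : V) : ℕ :=
  (G.neighborSet s ∩ S).ncard + ind A s + ind B s

/-- Every part of `S` separated by `R` meets `A` or `B`. -/
def Anchored (G : SimpleGraph V) (S A B R : Set V) : Prop :=
  ∀ T ⊆ S \ R, T.Nonempty → ClosedIn G T (S \ R) → ∃ v ∈ T, v ∈ A ∨ v ∈ B

/-- The hypotheses under which two links of nearly equal lengths exist. -/
structure LinkHyp (G : SimpleGraph V) (S A B : Set V) (e : V) : Prop where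
  conn : Conn G S
  exA : ∃ a ∈ S, a ∈ A
  exB : ∃ b ∈ S, b ∈ B
  cnt3 : ∀ s ∈ S, s ≠ e → 3 ≤ cnt G S A B s
  cnt2 : e ∈ S → 2 ≤ cnt G S A B e
  ne : ∃ s ∈ S, s ≠ e
  cut : ∀ t ∈ S, Anchored G S A B {t}

/-- Two links whose lengths differ by two. -/
def GoodLink (G : SimpleGraph V) (S A B : Set V) : Prop :=
  ∃ n, Link G S A B n ∧ Link G S A B (n + 2)

/-- An edge with both ends of small count whose removal leaves everything anchored. -/
def LowPair (G : SimpleGraph V) (S A B : Set V) : Prop :=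
  ∃ p ∈ S, ∃ q ∈ S, G.Adj p q ∧ cnt G S A B p ≤ 3 ∧ cnt G S A B q ≤ 3 ∧ Anchored G S A B {p, q}

def LinkConcl (G : SimpleGraph V) (S A B : Set V) (e : V) : Prop :=
  GoodLink G S A B ∨ ((∃ n, Link G S A B n ∧ Link G S A B (n + 1)) ∧ (e ∈ S ∨ LowPair G S A B))

section

variable {S T K A B A' B' R X : Set V} {u v w t x e e' s : V} {n r : ℕ}

theorem ind_le_one : ind A s ≤ 1 := by unfold ind; split_ifs <;> simp

theorem ind_of_mem (h : s ∈ A) : ind A s = 1 := if_pos h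

theorem ind_of_notMem (h : s ∉ A) : ind A s = 0 := if_neg h

theorem ind_mono (h : s ∈ A → s ∈ B) : ind A s ≤ ind B s := by
  by_cases hA : s ∈ A
  · rw [ind_of_mem hA, ind_of_mem (h hA)]
  · rw [ind_of_notMem hA]; exact Nat.zero_le _

theorem Set.Subsingleton.ncard_le_ind (hX : X.Subsingleton) (h : X.Nonempty → s ∈ A) :
    X.ncard ≤ ind A s := by
  rcases X.eq_empty_or_nonempty with rfl | hne
  · simp
  · rw [ind_of_mem (h hne)]
    have := hX.finite.to_subtype
    exact Set.ncard_le_one_iff_subsingleton.2 hX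

theorem Link.symm (h : Link G S A B n) : Link G S B A n := by
  obtain ⟨a, ha, b, hb, p⟩ := h
  exact ⟨b, hb, a, ha, p.symm⟩

theorem cnt_symm : cnt G S A B s = cnt G S B A s := by
  unfold cnt; omega

theorem Anchored.symm (h : Anchored G S A B R) : Anchored G S B A R := fun T h1 h2 h3 => by
  obtain ⟨v, hv, h⟩ := h T h1 h2 h3
  exact ⟨v, hv, h.symm⟩

theorem LinkHyp.symm (h : LinkHyp G S A B e) : LinkHyp G S B A e :=
  ⟨h.conn, h.exB, h.exA, fun s hs he => cnt_symm ▸ h.cnt3 s hs he, fun he => cnt_symm ▸ h.cnt2 he,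
    h.ne, fun t ht => (h.cut t ht).symm⟩

theorem LinkConcl.symm (h : LinkConcl G S A B e) : LinkConcl G S B A e := by
  rcases h with ⟨n, h1, h2⟩ | ⟨⟨n, h1, h2⟩, h⟩
  · exact .inl ⟨n, h1.symm, h2.symm⟩
  · refine .inr ⟨⟨n, h1.symm, h2.symm⟩, h.imp_right ?_⟩
    rintro ⟨p, hp, q, hq, ha, h1, h2, h3⟩
    exact ⟨p, hp, q, hq, ha, cnt_symm ▸ h1, cnt_symm ▸ h2, h3.symm⟩

theorem Anchored.restrict (h : Anchored G S A B R) (hK : K ⊆ S)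
    (hAB : ∀ s ∈ K, s ∈ A ∨ s ∈ B → s ∈ A' ∨ s ∈ B')
    (hbd : ∀ s ∈ K, ∀ x ∈ S \ K, G.Adj s x → s ∈ A' ∨ s ∈ B') : Anchored G K A' B' R := by
  intro T hT hne hc
  by_contra hcon
  push Not at hcon
  obtain ⟨v, hv, h⟩ := h T (hT.trans (Set.sdiff_subset_sdiff_left hK)) hne fun u hu v hv ha => by
    by_cases hvK : v ∈ K
    · exact hc u hu v ⟨hvK, hv.2⟩ ha
    · rcases hbd u (hT hu).1 v ⟨hv.1, hvK⟩ ha with h | h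
      exacts [absurd h (hcon u hu).1, absurd h (hcon u hu).2]
  rcases hAB v (hT hv).1 h with h | h
  exacts [(hcon v hv).1 h, (hcon v hv).2 h]

theorem Anchored.extend (h : Anchored G K A' B' R) (hRK : R ⊆ K)
    (hAB' : ∀ s ∈ K, s ∈ A' ∨ s ∈ B' → s ∈ A ∨ s ∈ B ∨ ∃ x ∈ S \ K, G.Adj s x)
    (hK : K ⊆ S) (hS : Anchored G S A B K) : Anchored G S A B R := by
  intro T hT hne hc
  by_contra hcon
  push Not at hcon
  have hTK : (T \ K).Nonempty := by
    by_contra hemp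
    have hsub : T ⊆ K := by
      intro x hx
      by_contra hxK
      exact hemp ⟨x, hx, hxK⟩
    obtain ⟨v, hv, hv'⟩ := h T (fun x hx => ⟨hsub hx, (hT hx).2⟩) hne
      fun u hu v hv ha => hc u hu v ⟨hK hv.1, hv.2⟩ ha
    rcases hAB' v (hsub hv) hv' with h | h | ⟨x, hx, ha⟩
    · exact (hcon v hv).1 h
    · exact (hcon v hv).2 h
    · exact hemp ⟨x, hc v hv x ⟨hx.1, fun h => hx.2 (hRK h)⟩ ha, hx.2⟩
  obtain ⟨v, hv, hv'⟩ := hS (T \ K) (fun x hx => ⟨(hT hx.1).1, hx.2⟩) hTK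
    fun u hu v hv ha => ⟨hc u hu.1 v ⟨hv.1, fun h => hv.2 (hRK h)⟩ ha, hv.2⟩
  rcases hv' with h | h
  exacts [(hcon v hv.1).1 h, (hcon v hv.1).2 h]

theorem LinkConcl.lift (h : LinkConcl G K A' B' e) (hK : K ⊆ S) (r : ℕ)
    (hL : ∀ n, Link G K A' B' n → Link G S A B (n + r))
    (hcnt : ∀ s ∈ K, cnt G S A B s ≤ cnt G K A' B' s)
    (hAB' : ∀ s ∈ K, s ∈ A' ∨ s ∈ B' → s ∈ A ∨ s ∈ B ∨ ∃ x ∈ S \ K, G.Adj s x)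
    (hS : Anchored G S A B K) : LinkConcl G S A B e := by
  rcases h with ⟨n, h1, h2⟩ | ⟨⟨n, h1, h2⟩, h⟩
  · exact .inl ⟨n + r, hL _ h1, by have := hL _ h2; rwa [add_right_comm] at this⟩
  · refine .inr ⟨⟨n + r, hL _ h1, by have := hL _ h2; rwa [add_right_comm] at this⟩, ?_⟩
    refine h.imp (fun h => hK h) ?_
    rintro ⟨p, hp, q, hq, ha, h1, h2, h3⟩
    refine ⟨p, hK hp, q, hK hq, ha, (hcnt p hp).trans h1, (hcnt q hq).trans h2,
      h3.extend ?_ hAB' hK hS⟩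
    rintro x (rfl | rfl)
    exacts [hp, hq]

theorem LinkConcl.lift_of_mem (h : LinkConcl G K A' B' e') (he : e ∈ S) (r : ℕ)
    (hL : ∀ n, Link G K A' B' n → Link G S A B (n + r)) : LinkConcl G S A B e := by
  rcases h with ⟨n, h1, h2⟩ | ⟨⟨n, h1, h2⟩, -⟩
  · exact .inl ⟨n + r, hL _ h1, by have := hL _ h2; rwa [add_right_comm] at this⟩
  · exact .inr ⟨⟨n + r, hL _ h1, by have := hL _ h2; rwa [add_right_comm] at this⟩, .inl he⟩

theorem LinkHyp.restrict (h : LinkHyp G S A B e) (hc : Conn G K) (hK : K ⊆ S)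
    (hA : ∃ a ∈ K, a ∈ A') (hB : ∃ b ∈ K, b ∈ B') (hne : ∃ s ∈ K, s ≠ e)
    (hcnt : ∀ s ∈ K, cnt G S A B s ≤ cnt G K A' B' s)
    (hAB : ∀ s ∈ K, s ∈ A ∨ s ∈ B → s ∈ A' ∨ s ∈ B')
    (hbd : ∀ s ∈ K, ∀ x ∈ S \ K, G.Adj s x → s ∈ A' ∨ s ∈ B') : LinkHyp G K A' B' e where
  conn := hc
  exA := hA
  exB := hB
  cnt3 s hs he := (h.cnt3 s (hK hs) he).trans (hcnt s hs)
  cnt2 he := (h.cnt2 (hK he)).trans (hcnt e he)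
  ne := hne
  cut t ht := (h.cut t (hK ht)).restrict hK hAB hbd

variable [Finite V]

theorem ncard_split (s : V) :
    (G.neighborSet s ∩ S).ncard ≤ (G.neighborSet s ∩ K).ncard +
      (G.neighborSet s ∩ (S \ K)).ncard := by
  refine (Set.ncard_le_ncard ?_ (Set.toFinite _)).trans (Set.ncard_union_le _ _)
  rintro x ⟨h1, h2⟩
  by_cases h : x ∈ K
  exacts [.inl ⟨h1, h⟩, .inr ⟨h1, h2, h⟩]

theorem LinkHyp.concl_of_closed_ne (h : LinkHyp G S A B e)
    (IH : ∀ K A' B' e', K.ncard < S.ncard → LinkHyp G K A' B' e' → LinkConcl G K A' B' e')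
    (ht : t ∈ S) (hK : K ⊆ S \ {t}) (hKc : Conn G K) (hcl : ClosedIn G K (S \ {t}))
    (hB : ∀ b ∈ K, b ∉ B) (hne : ∃ s ∈ K, s ≠ e) : LinkConcl G S A B e := by
  have hKS : K ⊆ S := hK.trans Set.sdiff_subset
  have htK : t ∉ K := fun h => (hK h).2 rfl
  have hKne : K.Nonempty := let ⟨s, hs, _⟩ := hne; ⟨s, hs⟩
  have hbd : ∀ s ∈ K, ∀ x ∈ S \ K, G.Adj s x → x = t := fun s hs x hx ha => by
    by_contra hxt
    exact hx.2 (hcl s hs x ⟨hx.1, hxt⟩ ha)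
  have hR : Conn G (S \ K) := h.conn.sdiff ht hK hcl
  obtain ⟨b, hbS, hbB⟩ := h.exB
  have hbK : b ∈ S \ K := ⟨hbS, fun h => hB b h hbB⟩
  obtain ⟨m, hm⟩ := hR.path ⟨ht, htK⟩ hbK
  have hcnt : ∀ s ∈ K, cnt G S A B s ≤ cnt G K A (G.neighborSet t) s := fun s hs => by
    have h1 := ncard_split (G := G) (S := S) (K := K) s
    have h2 : (G.neighborSet s ∩ (S \ K)).ncard ≤ ind (G.neighborSet t) s := by
      refine Set.Subsingleton.ncard_le_ind ?_ ?_
      · intro x hx y hy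
        rw [hbd s hs x hx.2 hx.1, hbd s hs y hy.2 hy.1]
      · rintro ⟨x, hx⟩
        rw [← hbd s hs x hx.2 hx.1]
        exact hx.1.symm
    have h3 := ind_of_notMem (hB s hs)
    unfold cnt
    omega
  refine (IH K A (G.neighborSet t) e (Set.ncard_lt_ncard ⟨hKS, fun h => htK (h ht)⟩)
    (h.restrict hKc hKS ?_ ?_ hne hcnt ?_ ?_)).lift hKS (m + 1) ?_ hcnt ?_ ?_
  · obtain ⟨v, hv, h' | h'⟩ := h.cut t ht K hK hKne hcl
    exacts [⟨v, hv, h'⟩, absurd h' (hB v hv)]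
  · obtain ⟨r, hr, x, hx, ha⟩ := h.conn.exists_adj (R := {t}) ⟨t, rfl, ht⟩ hK hcl hKne
    exact ⟨x, hx, by rw [← hr.1]; exact ha⟩
  · exact fun s hs h' => h'.imp_right fun h' => absurd h' (hB s hs)
  · exact fun s hs x hx ha => .inr (by rw [← hbd s hs x hx ha]; exact ha.symm)
  · rintro n ⟨a, ha, y, hy, p⟩
    exact ⟨a, ha, b, hbB, p.append_of_subset hm hy.symm Set.disjoint_sdiff_right hKS
      Set.sdiff_subset⟩
  · rintro s hs (h' | h')
    exacts [.inl h', .inr (.inr ⟨t, ⟨ht, htK⟩, h'.symm⟩)]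
  · intro T hT hTne hTc
    rw [hR T hT hTne hTc]
    exact ⟨b, hbK, .inr hbB⟩

theorem LinkHyp.concl_of_pendant (h : LinkHyp G S A B e)
    (IH : ∀ K A' B' e', K.ncard < S.ncard → LinkHyp G K A' B' e' → LinkConcl G K A' B' e')
    (ht : t ∈ S) (he : e ∈ S) (hte : e ≠ t) (hcl : ClosedIn G {e} (S \ {t})) (heB : e ∉ B) :
    LinkConcl G S A B e := by
  by_contra hcon
  have hN : ∀ x ∈ S, G.Adj e x → x = t := fun x hx ha => by
    by_contra hxt
    have : x = e := hcl e rfl x ⟨hx, hxt⟩ ha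
    exact G.loopless.irrefl e (this ▸ ha)
  have hesub : ({e} : Set V) ⊆ S \ {t} := by rintro x rfl; exact ⟨he, hte⟩
  have hR : Conn G (S \ {e}) := h.conn.sdiff ht hesub hcl
  have htR : t ∈ S \ {e} := ⟨ht, hte.symm⟩
  have hat : G.Adj e t := by
    obtain ⟨r, hr, x, hx, ha⟩ := h.conn.exists_adj (R := {t}) ⟨t, rfl, ht⟩ hesub hcl ⟨e, rfl⟩
    rw [← hr.1, ← hx]; exact ha.symm
  have heA : e ∈ A := by
    by_contra heA
    have h1 := h.cnt2 he
    have h2 : (G.neighborSet e ∩ S).ncard ≤ 1 := Set.ncard_le_one_iff_subsingleton.2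
      fun x hx y hy => by rw [hN x hx.2 hx.1, hN y hy.2 hy.1]
    unfold cnt at h1
    rw [ind_of_notMem heA, ind_of_notMem heB] at h1
    omega
  obtain ⟨b, hbS, hbB⟩ := h.exB
  have hb : b ∈ S \ {e} := ⟨hbS, fun h => heB (h ▸ hbB)⟩
  have hlt : (S \ {e}).ncard < S.ncard :=
    Set.ncard_lt_ncard ⟨Set.sdiff_subset, fun h => (h he).2 rfl⟩
  have hbd : ∀ x ∈ S \ (S \ {e}), x = e := fun x hx => by
    by_contra hxe
    exact hx.2 ⟨hx.1, hxe⟩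
  by_cases htA : t ∈ A
  · obtain ⟨m, hm⟩ := hR.path htR hb
    exact hcon (.inr ⟨⟨m, ⟨t, htA, b, hbB, hm.mono Set.sdiff_subset⟩,
      ⟨e, heA, b, hbB, .cons he hat hm⟩⟩, .inl he⟩)
  by_cases hA : ∃ a ∈ S, a ∈ A ∧ a ≠ e
  · obtain ⟨a, haS, haA, hae⟩ := hA
    refine hcon ((IH (S \ {e}) A B t hlt ⟨hR, ⟨a, ⟨haS, hae⟩, haA⟩, ⟨b, hb, hbB⟩, ?_, ?_, ?_,
      ?_⟩).lift_of_mem he 0 ?_)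
    · intro s hs hst
      refine (h.cnt3 s hs.1 hs.2).trans ?_
      have : (G.neighborSet s ∩ S).ncard ≤ (G.neighborSet s ∩ (S \ {e})).ncard := by
        refine Set.ncard_le_ncard ?_ (Set.toFinite _)
        rintro x ⟨h1, h2⟩
        refine ⟨h1, h2, fun hx => hst (hN s hs.1 ?_)⟩
        rw [← hx]; exact h1.symm
      unfold cnt
      omega
    · intro _
      have h1 := h.cnt3 t ht hte.symm
      have h2 := ncard_split (G := G) (S := S) (K := S \ {e}) t
      have h3 : (G.neighborSet t ∩ (S \ (S \ {e}))).ncard ≤ 1 :=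
        Set.ncard_le_one_iff_subsingleton.2 fun x hx y hy => by rw [hbd x hx.2, hbd y hy.2]
      unfold cnt at h1 ⊢
      omega
    · exact ⟨a, ⟨haS, hae⟩, fun h => htA (h ▸ haA)⟩
    · intro t' ht' T hT hTne hTc
      by_contra hno
      push Not at hno
      by_cases htT : t ∈ T
      · have hcl' : ClosedIn G (T ∪ {e}) (S \ {t'}) := by
          rintro u (hu | hu) v hv ha
          · by_cases hve : v = e
            exacts [.inr hve, .inl (hTc u hu v ⟨⟨hv.1, hve⟩, hv.2⟩ ha)]
          · rw [hu] at ha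
            rw [hN v hv.1 ha]
            exact .inl htT
        have htt : t ∈ S \ {t'} := ⟨ht, (hT htT).2⟩
        refine hcon (h.concl_of_closed_ne IH ht'.1 (comp_subset (v := t)) comp_conn comp_closed ?_
          ⟨t, mem_comp_self htt, hte.symm⟩)
        rintro y ⟨n, p⟩
        rcases hcl'.path p subset_rfl (.inl htT) with h' | h'
        · exact (hno y h').2
        · rw [h']; exact heB
      · obtain ⟨v, hv, hv'⟩ := h.cut t' ht'.1 T (fun x hx => ⟨(hT hx).1.1, (hT hx).2⟩) hTne
          fun u hu v hv ha => by
            refine hTc u hu v ⟨⟨hv.1, fun hve => htT ?_⟩, hv.2⟩ ha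
            rw [← hN u (hT hu).1.1 (by rw [← (hve : v = e)]; exact ha.symm)]
            exact hu
        rcases hv' with h' | h'
        exacts [(hno v hv).1 h', (hno v hv).2 h']
    · rintro n ⟨a, ha, b, hb, p⟩
      exact ⟨a, ha, b, hb, p.mono Set.sdiff_subset⟩
  · push Not at hA
    refine hcon ((IH (S \ {e}) {t} B e hlt (h.restrict hR Set.sdiff_subset ⟨t, htR, rfl⟩
      ⟨b, hb, hbB⟩ ⟨t, htR, hte.symm⟩ ?_ ?_ ?_)).lift_of_mem he 1 ?_)
    · intro s hs
      have h1 := ncard_split (G := G) (S := S) (K := S \ {e}) s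
      have h2 : (G.neighborSet s ∩ (S \ (S \ {e}))).ncard ≤ ind {t} s := by
        refine Set.Subsingleton.ncard_le_ind ?_ ?_
        · exact fun x hx y hy => by rw [hbd x hx.2, hbd y hy.2]
        · rintro ⟨x, hx⟩
          exact hN s hs.1 (by rw [← hbd x hx.2]; exact hx.1.symm)
      have h3 : ind A s = 0 := ind_of_notMem fun h => hs.2 (hA s hs.1 h)
      unfold cnt
      omega
    · exact fun s hs h' => h'.imp_left fun h' => absurd (hA s hs.1 h') hs.2
    · exact fun s hs x hx ha => .inl (hN s hs.1 (by rw [← hbd x hx]; exact ha.symm))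
    · rintro n ⟨a, rfl, b, hb, p⟩
      exact ⟨e, heA, b, hb, .cons he hat p⟩

theorem LinkHyp.meets (h : LinkHyp G S A B e)
    (IH : ∀ K A' B' e', K.ncard < S.ncard → LinkHyp G K A' B' e' → LinkConcl G K A' B' e')
    (hcon : ¬ LinkConcl G S A B e) (ht : t ∈ S) (hT : T ⊆ S \ {t}) (hne : T.Nonempty)
    (hcl : ClosedIn G T (S \ {t})) : ∃ v ∈ T, v ∈ B := by
  by_contra hno
  push Not at hno
  obtain ⟨x, hx⟩ := hne
  have hsub : comp G (S \ {t}) x ⊆ T := fun y ⟨n, p⟩ => hcl.path p subset_rfl hx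
  by_cases hne : ∃ s ∈ comp G (S \ {t}) x, s ≠ e
  · exact hcon (h.concl_of_closed_ne IH ht comp_subset comp_conn comp_closed
      (fun b hb => hno b (hsub hb)) hne)
  · push Not at hne
    have hxe := hne x (mem_comp_self (hT hx))
    have heq : comp G (S \ {t}) x = {e} := by
      refine Set.Subset.antisymm (fun y hy => hne y hy) ?_
      rintro y rfl
      rw [← hxe]; exact mem_comp_self (hT hx)
    have := comp_closed (G := G) (S := S \ {t}) (v := x)
    rw [heq] at this
    rw [hxe] at hx
    exact hcon (h.concl_of_pendant IH ht (hT hx).1 (hT hx).2 this (hno e hx))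

theorem LinkHyp.subsingleton (h : LinkHyp G S A B e)
    (IH : ∀ K A' B' e', K.ncard < S.ncard → LinkHyp G K A' B' e' → LinkConcl G K A' B' e')
    (hcon : ¬ LinkConcl G S A B e) (hw : w ∈ S) : (G.neighborSet w ∩ S ∩ A).Subsingleton := by
  intro u hu v hv
  by_contra huv
  refine hcon (.inl ?_)
  have huw : u ∈ S \ {w} := ⟨hu.1.2, fun h => G.loopless.irrefl w (by
    have := hu.1.1; rwa [show u = w from h] at this)⟩
  obtain ⟨b, ⟨n, p⟩, hb⟩ := h.meets IH hcon hw (comp_subset (v := u)) ⟨u, mem_comp_self huw⟩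
    comp_closed
  obtain ⟨u', hu', m, q, -⟩ := p.exists_last (U := {u, v}) (.inl rfl)
  have key : ∀ x y, x ∈ G.neighborSet w ∩ S ∩ A → y ∈ G.neighborSet w ∩ S ∩ A → x ≠ y →
      PathIn G ((S \ {w}) \ {x, y} ∪ {x}) x b m → GoodLink G S A B := by
    intro x y hx hy hxy p
    have hyw : y ≠ w := fun h => G.loopless.irrefl w (by have := hy.1.1; rwa [h] at this)
    have hxw : x ≠ w := fun h => G.loopless.irrefl w (by have := hx.1.1; rwa [h] at this)
    refine ⟨m, ⟨x, hx.2, b, hb, p.mono ?_⟩, ⟨y, hy.2, b, hb, ?_⟩⟩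
    · rintro z (hz | rfl)
      exacts [hz.1.1, hx.1.2]
    · refine .cons hy.1.2 hy.1.1.symm (.cons ⟨hw, hyw.symm⟩ hx.1.1 (p.mono ?_))
      rintro z (hz | rfl)
      · exact ⟨⟨hz.1.1, fun h => hz.2 (.inr h)⟩, hz.1.2⟩
      · exact ⟨⟨hx.1.2, hxy⟩, hxw⟩
  rcases hu' with rfl | rfl
  · exact key _ v hu hv huv q
  · refine key _ u hv hu (Ne.symm huv) ?_
    rwa [Set.pair_comm]

theorem LinkHyp.subset (h : LinkHyp G S A B e)
    (IH : ∀ K A' B' e', K.ncard < S.ncard → LinkHyp G K A' B' e' → LinkConcl G K A' B' e')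
    (hcon : ¬ LinkConcl G S A B e) (hs : s ∈ S) (hsB : s ∈ B) : s ∈ A := by
  by_contra hsA
  have hsub := fun w (hw : w ∈ S) => h.subsingleton IH hcon hw
  set K := comp G (S \ A) s with hKdef
  have hKA : K ⊆ S \ A := comp_subset
  have hKS : K ⊆ S := hKA.trans Set.sdiff_subset
  have hsK : s ∈ K := mem_comp_self ⟨hs, hsA⟩
  have hcl : ClosedIn G K (S \ A) := comp_closed
  have hbd : ∀ s ∈ K, ∀ x ∈ S \ K, G.Adj s x → x ∈ A := fun s hs x hx ha => by
    by_contra hxA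
    exact hx.2 (hcl s hs x ⟨hx.1, hxA⟩ ha)
  obtain ⟨a, haS, haA⟩ := h.exA
  have haK : a ∉ K := fun h => (hKA h).2 haA
  let A' : Set V := {v | ∃ a ∈ S, a ∈ A ∧ G.Adj a v}
  have hcnt : ∀ s ∈ K, cnt G S A B s ≤ cnt G K A' B s := fun s hs => by
    have h1 := ncard_split (G := G) (S := S) (K := K) s
    have h2 : (G.neighborSet s ∩ (S \ K)).ncard ≤ ind A' s := by
      refine Set.Subsingleton.ncard_le_ind ?_ ?_
      · exact (hsub s (hKS hs)).anti fun x hx => ⟨⟨hx.1, hx.2.1⟩, hbd s hs x hx.2 hx.1⟩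
      · rintro ⟨x, hx⟩
        exact ⟨x, hx.2.1, hbd s hs x hx.2 hx.1, hx.1.symm⟩
    have h3 := ind_of_notMem (hKA hs).2
    unfold cnt
    omega
  obtain ⟨a1, ha1, x1, hx1, hadj⟩ := h.conn.exists_adj ⟨a, haA, haS⟩ hKA hcl ⟨s, hsK⟩
  refine hcon ((IH K A' B e (Set.ncard_lt_ncard ⟨hKS, fun h => haK (h haS)⟩)
    (h.restrict comp_conn hKS ⟨x1, hx1, a1, ha1.2, ha1.1, hadj⟩ ⟨s, hsK, hsB⟩ ?_ hcnt ?_ ?_)).lift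
    hKS 1 ?_ hcnt ?_ ?_)
  · by_contra hne
    push Not at hne
    have hKe : K ⊆ {x1} := fun y hy => (hne y hy).trans (hne x1 hx1).symm
    obtain ⟨v, hv, hvA⟩ := h.symm.meets (fun K A' B' e' h1 h2 => (IH K B' A' e' h1 h2.symm).symm)
      (fun h => hcon h.symm) ha1.2 (T := K)
      (fun y hy => ⟨hKS hy, fun h => (hKA hy).2 (by rw [show y = a1 from h]; exact ha1.1)⟩)
      ⟨x1, hx1⟩ fun u hu v hv ha => by
        by_contra hvK
        have hux : u = x1 := hKe hu
        refine hv.2 ((hsub u (hKS hu)) ⟨⟨ha, hv.1⟩, hbd u hu v ⟨hv.1, hvK⟩ ha⟩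
          ⟨⟨?_, ha1.2⟩, ha1.1⟩)
        rw [hux]; exact hadj.symm
    exact (hKA hv).2 hvA
  · exact fun s hs h' => h'.imp_left fun h' => absurd h' (hKA hs).2
  · exact fun s hs x hx ha => .inl ⟨x, hx.1, hbd s hs x hx ha, ha.symm⟩
  · rintro n ⟨y, ⟨c, hcS, hcA, hc⟩, b, hb, p⟩
    refine ⟨c, hcA, b, hb, .cons hcS hc (p.mono fun z hz => ⟨hKS hz, fun h => (hKA hz).2 ?_⟩)⟩
    rw [show z = c from h]; exact hcA
  · rintro s hs (⟨c, hcS, hcA, hc⟩ | h')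
    · exact .inr (.inr ⟨c, ⟨hcS, fun h => (hKA h).2 hcA⟩, hc.symm⟩)
    · exact .inr (.inl h')
  · intro T hT hTne hTc
    by_contra hno
    push Not at hno
    have : T = S := h.conn T (hT.trans Set.sdiff_subset) hTne fun u hu v hv ha => by
      by_cases hvK : v ∈ K
      · exact absurd (hcl v hvK u ⟨(hT hu).1, (hno u hu).1⟩ ha.symm) (hT hu).2
      · exact hTc u hu v ⟨hv, hvK⟩ ha
    exact (hno a (this ▸ haS)).1 haA

theorem LinkHyp.concl_of_eq (h : LinkHyp G S A B e)
    (IH : ∀ K A' B' e', K.ncard < S.ncard → LinkHyp G K A' B' e' → LinkConcl G K A' B' e')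
    (hcon : ¬ LinkConcl G S A B e) (hAB : ∀ s ∈ S, s ∈ A ↔ s ∈ B) : False := by
  have hsub := fun w (hw : w ∈ S) => h.subsingleton IH hcon hw
  by_cases hall : ∀ s ∈ S, s ∈ A
  · have hle : ∀ s ∈ S, (G.neighborSet s ∩ S).ncard ≤ 1 := fun s hs => by
      refine Set.ncard_le_one_iff_subsingleton.2 ((hsub s hs).anti fun x hx => ?_)
      exact ⟨hx, hall x hx.2⟩
    have hc3 : ∀ s ∈ S, cnt G S A B s ≤ 3 := fun s hs => by
      have h1 := hle s hs
      have h2 := ind_le_one (A := A) (s := s)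
      have h3 := ind_le_one (A := B) (s := s)
      unfold cnt
      omega
    obtain ⟨p, hp, hpe⟩ := h.ne
    have h0 := h.cnt3 p hp hpe
    have hne : (G.neighborSet p ∩ S).Nonempty := by
      by_contra hemp
      rw [Set.not_nonempty_iff_eq_empty] at hemp
      have h2 := ind_le_one (A := A) (s := p)
      have h3 := ind_le_one (A := B) (s := p)
      unfold cnt at h0
      rw [hemp, Set.ncard_empty] at h0
      omega
    obtain ⟨q, hpq, hq⟩ := hne
    refine hcon (.inr ⟨⟨0, ⟨p, hall p hp, p, (hAB p hp).1 (hall p hp), .nil hp⟩,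
      ⟨p, hall p hp, q, (hAB q hq).1 (hall q hq), .cons hp hpq (.nil ⟨hq, hpq.ne'⟩)⟩⟩,
      .inr ⟨p, hp, q, hq, hpq, hc3 p hp, hc3 q hq, ?_⟩⟩)
    rintro T hT ⟨x, hx⟩ _
    exact ⟨x, hx, .inl (hall x (hT hx).1)⟩
  push Not at hall
  obtain ⟨s, hs, hsA⟩ := hall
  set K := comp G (S \ A) s with hKdef
  have hKA : K ⊆ S \ A := comp_subset
  have hKS : K ⊆ S := hKA.trans Set.sdiff_subset
  have hsK : s ∈ K := mem_comp_self ⟨hs, hsA⟩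
  have hcl : ClosedIn G K (S \ A) := comp_closed
  have hbd : ∀ s ∈ K, ∀ x ∈ S \ K, G.Adj s x → x ∈ A := fun s hs x hx ha => by
    by_contra hxA
    exact hx.2 (hcl s hs x ⟨hx.1, hxA⟩ ha)
  obtain ⟨a, haS, haA⟩ := h.exA
  have haK : a ∉ K := fun h => (hKA h).2 haA
  obtain ⟨u, ⟨huA, huS⟩, x1, hx1, hadj⟩ := h.conn.exists_adj ⟨a, haA, haS⟩ hKA hcl ⟨s, hsK⟩
  have huK : u ∉ K := fun h => (hKA h).2 huA
  obtain ⟨x2, hx2, a2, ha2S, ha2A, ha2u, hadj2⟩ :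
      ∃ x ∈ K, ∃ a ∈ S, a ∈ A ∧ a ≠ u ∧ G.Adj a x := by
    by_contra hno
    push Not at hno
    obtain ⟨v, hv, hvA⟩ := h.meets IH hcon huS (T := K)
      (fun y hy => ⟨hKS hy, fun h => huK (by rwa [show y = u from h] at hy)⟩)
      ⟨s, hsK⟩ fun y hy v hv ha => by
        by_contra hvK
        exact hno y hy v hv.1 (hbd y hy v ⟨hv.1, hvK⟩ ha) hv.2 ha.symm
    exact (hKA hv).2 ((hAB v (hKS hv)).2 hvA)
  let A' : Set V := {v | ∃ a ∈ S, a ∈ A ∧ a ≠ u ∧ G.Adj a v}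
  have hmem : ∀ s ∈ K, ∀ x ∈ S \ K, G.Adj s x → s ∈ A' ∨ s ∈ G.neighborSet u := by
    intro s hs x hx ha
    by_cases hxu : x = u
    · right; rw [← hxu]; exact ha.symm
    · exact .inl ⟨x, hx.1, hbd s hs x hx ha, hxu, ha.symm⟩
  have hcnt : ∀ s ∈ K, cnt G S A B s ≤ cnt G K A' (G.neighborSet u) s := fun s hs => by
    have h1 := ncard_split (G := G) (S := S) (K := K) s
    have h2 : (G.neighborSet s ∩ (S \ K)).ncard ≤ ind (A' ∪ G.neighborSet u) s := by
      refine Set.Subsingleton.ncard_le_ind ?_ ?_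
      · exact (hsub s (hKS hs)).anti fun x hx => ⟨⟨hx.1, hx.2.1⟩, hbd s hs x hx.2 hx.1⟩
      · rintro ⟨x, hx⟩
        exact hmem s hs x hx.2 hx.1
    have h3 := ind_of_notMem (hKA hs).2
    have h4 := ind_of_notMem fun h => (hKA hs).2 ((hAB s (hKS hs)).2 h)
    have h5 : ind (A' ∪ G.neighborSet u) s ≤ ind A' s + ind (G.neighborSet u) s := by
      by_cases h : s ∈ A'
      · rw [ind_of_mem h]; have := ind_le_one (A := A' ∪ G.neighborSet u) (s := s); omega
      · exact (ind_mono fun h' => h'.resolve_left h).trans (Nat.le_add_left _ _)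
    unfold cnt
    omega
  refine hcon ((IH K A' (G.neighborSet u) e (Set.ncard_lt_ncard ⟨hKS, fun h => haK (h haS)⟩)
    (h.restrict comp_conn hKS ⟨x2, hx2, a2, ha2S, ha2A, ha2u, hadj2⟩ ⟨x1, hx1, hadj⟩ ?_ hcnt ?_
    hmem)).lift hKS 2 ?_ hcnt ?_ ?_)
  · by_contra hne
    push Not at hne
    have h12 : x1 = x2 := (hne x1 hx1).trans (hne x2 hx2).symm
    refine ha2u (hsub x2 (hKS hx2) ⟨⟨hadj2.symm, ha2S⟩, ha2A⟩ ⟨⟨?_, huS⟩, huA⟩)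
    rw [← h12]; exact hadj.symm
  · rintro s hs (h' | h')
    · exact absurd h' (hKA hs).2
    · exact absurd ((hAB s (hKS hs)).2 h') (hKA hs).2
  · rintro n ⟨y, ⟨c, hcS, hcA, hcu, hc⟩, b, hb, p⟩
    have hd : Disjoint K {u} := Set.disjoint_singleton_right.2 huK
    refine ⟨c, hcA, u, (hAB u huS).1 huA,
      .cons hcS hc (p.append_of_subset (.nil (S := {u}) rfl) hb.symm hd ?_ ?_)⟩
    · refine fun z hz => ⟨hKS hz, fun h => (hKA hz).2 ?_⟩
      rw [show z = c from h]; exact hcA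
    · rintro z rfl
      exact ⟨huS, hcu.symm⟩
  · rintro s hs (⟨c, hcS, hcA, -, hc⟩ | h')
    · exact .inr (.inr ⟨c, ⟨hcS, fun h => (hKA h).2 hcA⟩, hc.symm⟩)
    · exact .inr (.inr ⟨u, ⟨huS, huK⟩, h'.symm⟩)
  · intro T hT hTne hTc
    by_contra hno
    push Not at hno
    have : T = S := h.conn T (hT.trans Set.sdiff_subset) hTne fun u hu v hv ha => by
      by_cases hvK : v ∈ K
      · exact absurd (hcl v hvK u ⟨(hT hu).1, (hno u hu).1⟩ ha.symm) (hT hu).2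
      · exact hTc u hu v ⟨hv, hvK⟩ ha
    exact (hno a (this ▸ haS)).1 haA

theorem LinkHyp.concl : LinkHyp G S A B e → LinkConcl G S A B e := by
  induction hn : S.ncard using Nat.strong_induction_on generalizing S A B e with
  | _ n ih =>
    intro h
    have IH : ∀ K A' B' e', K.ncard < S.ncard → LinkHyp G K A' B' e' → LinkConcl G K A' B' e' :=
      fun K A' B' e' hK => ih K.ncard (hn ▸ hK) rfl
    by_contra hcon
    exact h.concl_of_eq IH hcon fun s hs =>
      ⟨fun hA => h.symm.subset (fun K A' B' e' h1 h2 => (IH K B' A' e' h1 h2.symm).symm)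
        (fun h => hcon h.symm) hs hA, fun hB => h.subset IH hcon hs hB⟩

theorem LinkHyp.exists_link (h : LinkHyp G S A B e) :
    ∃ n d, (d = 1 ∨ d = 2) ∧ Link G S A B n ∧ Link G S A B (n + d) := by
  rcases h.concl with ⟨n, h1, h2⟩ | ⟨⟨n, h1, h2⟩, -⟩
  exacts [⟨n, 2, .inr rfl, h1, h2⟩, ⟨n, 1, .inl rfl, h1, h2⟩]

end

section

variable {S T K C H X Z A B : Set V} {u v w x y z t : V} {l n : ℕ}

theorem Set.ncard_pair_le (a b : V) : ({a, b} : Set V).ncard ≤ 2 := by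
  have := Set.ncard_insert_le a {b}
  rwa [Set.ncard_singleton] at this

theorem Set.nonempty_of_ncard_pos (h : 0 < S.ncard) : S.Nonempty :=
  Set.nonempty_of_ncard_ne_zero h.ne'

theorem conn_of_induce (h : (G.induce S).Preconnected) : Conn G S := by
  rintro T hT ⟨x, hx⟩ hc
  refine hT.antisymm fun y hy => ?_
  obtain ⟨p⟩ := h ⟨x, hT hx⟩ ⟨y, hy⟩
  have key : ∀ {a b : S}, (G.induce S).Walk a b → a.1 ∈ T → b.1 ∈ T := by
    intro a b p
    induction p with
    | nil => exact id
    | @cons a b c ha _ ih => exact fun h => ih (hc a h b b.2 ha)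
  exact key p hx

theorem KConnected.not_sep [Finite V] (h3 : KConnected G 3) (hne : C.Nonempty)
    (hZ : Z.ncard ≤ 2) (hbd : ∀ u ∈ C, ∀ v, G.Adj u v → v ∈ C ∨ v ∈ Z) (hw : w ∉ C)
    (hwZ : w ∉ Z) : False := by
  have hc : (Z \ C).ncard < 3 :=
    (Set.ncard_le_ncard Set.sdiff_subset (Set.toFinite _)).trans_lt (by omega)
  have := conn_of_induce (h3.2 (Z \ C) (Set.toFinite _) hc).preconnected C
    (fun x hx h => h.2 hx) hne fun u hu v hv ha => (hbd u hu v ha).elim id fun h => by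
      by_contra h'
      exact hv ⟨h, h'⟩
  exact hw (this ▸ fun h => hwZ h.1)

theorem KConnected.attached [Finite V] (h3 : KConnected G 3) (hne : C.Nonempty)
    (hZ : Z.ncard ≤ 3) (hbd : ∀ u ∈ C, ∀ v, G.Adj u v → v ∈ C ∨ v ∈ Z) (hz : z ∈ Z)
    (hzC : z ∉ C) : ∃ c ∈ C, G.Adj c z := by
  by_contra hno
  push Not at hno
  refine h3.not_sep (Z := Z \ {z}) (w := z) hne ?_ (fun u hu v ha => ?_) hzC (fun h => h.2 rfl)
  · rw [Set.ncard_sdiff_singleton_of_mem hz]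
    omega
  · refine (hbd u hu v ha).imp_right fun h => ⟨h, fun hv => hno u hu ?_⟩
    rwa [← show v = z from hv]

theorem hasConsecCycles_four (m : ℕ) (h0 : HasCycleLength G m) (h1 : HasCycleLength G (m + 1))
    (h2 : HasCycleLength G (m + 2)) (h3 : HasCycleLength G (m + 3)) : HasConsecCycles G 4 := by
  refine ⟨m, fun i hi => ?_⟩
  interval_cases i
  exacts [h0, h1, h2, h3]

theorem SimpleGraph.IsClique.pathIn [Finite V] (hX : G.IsClique X) (hx : x ∈ X) (hy : y ∈ X)
    (hxy : x ≠ y) (h1 : 1 ≤ n) (hn : n < X.ncard) : PathIn G X x y n := by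
  induction n, h1 using Nat.le_induction generalizing X x with
  | base => exact .cons (n := 0) hx (hX hx hy hxy) (.nil ⟨hy, hxy.symm⟩)
  | succ k hk ih =>
    have h2 : 0 < (X \ {x, y}).ncard := by
      have := Set.le_ncard_sdiff {x, y} X
      have := Set.ncard_pair_le x y
      omega
    obtain ⟨z, hz, hzn⟩ := Set.nonempty_of_ncard_pos h2
    have hzx : z ≠ x := fun h => hzn (.inl h)
    have hzy : z ≠ y := fun h => hzn (.inr h)
    refine .cons hx (hX hx hz hzx.symm) (ih (hX.subset Set.sdiff_subset) ⟨hz, hzx⟩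
      ⟨hy, hxy.symm⟩ hzy ?_)
    rw [Set.ncard_sdiff_singleton_of_mem hx]
    omega

theorem PathIn.cycle_of_clique [Finite V] (p : PathIn G S u w l) (hX : G.IsClique X)
    (hd : Disjoint S X) (hx : x ∈ X) (hy : y ∈ X) (hxy : x ≠ y) (hu : G.Adj u x) (hw : G.Adj w y)
    (h1 : 1 ≤ n) (hn : n < X.ncard) : HasCycleLength G (l + n + 2) :=
  p.hasCycleLength (hX.pathIn hx hy hxy h1 hn) hd hu hw (by omega)

/-- A path in `H` whose ends are attached to distinct vertices of `T`. -/
def Ear (G : SimpleGraph V) (H T : Set V) (n : ℕ) : Prop :=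
  ∃ u w x y, x ∈ T ∧ y ∈ T ∧ x ≠ y ∧ G.Adj u x ∧ G.Adj w y ∧ PathIn G H u w n

theorem Ear.cycle [Finite V] (h : Ear G H X l) (hX : G.IsClique X) (hd : Disjoint H X)
    (h1 : 1 ≤ n) (hn : n < X.ncard) : HasCycleLength G (l + n + 2) := by
  obtain ⟨u, w, x, y, hx, hy, hxy, hu, hw, p⟩ := h
  exact p.cycle_of_clique hX hd hx hy hxy hu hw h1 hn

theorem Ear.consec_five [Finite V] (h : Ear G H X l) (hX : G.IsClique X) (hd : Disjoint H X)
    (hn : 5 ≤ X.ncard) : HasConsecCycles G 4 :=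
  hasConsecCycles_four (l + 1 + 2) (h.cycle hX hd le_rfl (by omega))
    (h.cycle hX hd (n := 2) (by omega) (by omega)) (h.cycle hX hd (n := 3) (by omega) (by omega))
    (h.cycle hX hd (n := 4) (by omega) (by omega))

theorem Ear.consec_four [Finite V] {d : ℕ} (h : Ear G H X l) (h' : Ear G H X (l + d))
    (hd12 : d = 1 ∨ d = 2) (hX : G.IsClique X) (hd : Disjoint H X) (hn : 4 ≤ X.ncard) :
    HasConsecCycles G 4 := by
  refine hasConsecCycles_four (l + 1 + 2) (h.cycle hX hd le_rfl (by omega))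
    (h.cycle hX hd (n := 2) (by omega) (by omega)) (h.cycle hX hd (n := 3) (by omega) (by omega))
    ?_
  rcases hd12 with rfl | rfl
  · exact h'.cycle hX hd (n := 3) (by omega) (by omega)
  · exact h'.cycle hX hd (n := 2) (by omega) (by omega)

theorem Ear.consec_three [Finite V] (h : Ear G H X l) (h' : Ear G H X (l + 2))
    (hX : G.IsClique X) (hd : Disjoint H X) (hn : 3 ≤ X.ncard) : HasConsecCycles G 4 :=
  hasConsecCycles_four (l + 1 + 2) (h.cycle hX hd le_rfl (by omega))
    (h.cycle hX hd (n := 2) (by omega) (by omega)) (h'.cycle hX hd (n := 1) (by omega) (by omega))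
    (h'.cycle hX hd (n := 2) (by omega) (by omega))

/-- The vertices having a neighbour in `T`. -/
def attach (G : SimpleGraph V) (T : Set V) : Set V := {v | ∃ x ∈ T, G.Adj v x}

theorem PathIn.ear [Finite V] (p : PathIn G H v w n) (hv : 2 ≤ (G.neighborSet v ∩ T).ncard)
    (hw : w ∈ attach G T) : Ear G H T n := by
  obtain ⟨y, hy, hwy⟩ := hw
  obtain ⟨x, hx, hxy⟩ := Set.exists_ne_of_one_lt_ncard (s := G.neighborSet v ∩ T) (by omega) y
  exact ⟨v, w, x, y, hx.2, hy, hxy, hx.1, hwy, p⟩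

theorem mem_attach_of_pos (h : 0 < (G.neighborSet u ∩ T).ncard) : u ∈ attach G T := by
  obtain ⟨x, hx⟩ := Set.nonempty_of_ncard_pos h
  exact ⟨x, hx.2, hx.1⟩

theorem lab_eq_zero (h : u ∉ attach G T) : (G.neighborSet u ∩ T).ncard = 0 := by
  by_contra h'
  exact h (mem_attach_of_pos (Nat.pos_of_ne_zero h'))

/-- Data of a component `H` of the complement of a triangle `T`. -/
structure TriComp (G : SimpleGraph V) (H T : Set V) : Prop where
  h3 : KConnected G 3
  hdeg : ∀ v, 4 ≤ (G.neighborSet v).ncard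
  clique : G.IsClique T
  card : T.ncard = 3
  conn : Conn G H
  ne : H.Nonempty
  disj : Disjoint H T
  bd : ∀ u ∈ H, ∀ v, G.Adj u v → v ∈ H ∨ v ∈ T

theorem TriComp.exists_T (h : TriComp G H T) : ∃ t ∈ T, t ∉ H := by
  obtain ⟨t, ht⟩ := Set.nonempty_of_ncard_pos (S := T) (by have := h.card; omega)
  exact ⟨t, ht, Set.disjoint_right.1 h.disj ht⟩

variable [Finite V]

theorem TriComp.deg (h : TriComp G H T) (hu : u ∈ H) :
    4 ≤ (G.neighborSet u ∩ H).ncard + (G.neighborSet u ∩ T).ncard := by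
  refine (h.hdeg u).trans ((Set.ncard_le_ncard ?_ (Set.toFinite _)).trans (Set.ncard_union_le _ _))
  exact fun x hx => (h.bd u hu x hx).imp (fun h => ⟨hx, h⟩) fun h => ⟨hx, h⟩

theorem TriComp.lab_le (h : TriComp G H T) : (G.neighborSet u ∩ T).ncard ≤ 3 :=
  (Set.ncard_le_ncard Set.inter_subset_right (Set.toFinite _)).trans h.card.le

/-- A nonempty part of `H` all of whose neighbours outside lie in a set of size at most two or
in `T` has a vertex attached to `T`. -/
theorem TriComp.exists_attach (h : TriComp G H T) (hC : C ⊆ H) (hne : C.Nonempty)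
    (hZ : Z.ncard ≤ 2) (hZH : Z ⊆ H) (hbd : ∀ u ∈ C, ∀ v ∈ H, G.Adj u v → v ∈ C ∨ v ∈ Z) :
    ∃ c ∈ C, c ∈ attach G T := by
  by_contra hno
  push Not at hno
  obtain ⟨t, ht, htH⟩ := h.exists_T
  refine h.h3.not_sep hne hZ (w := t) (fun u hu v ha => ?_) (fun h => htH (hC h))
    fun h => htH (hZH h)
  rcases h.bd u (hC hu) v ha with h' | h'
  · exact hbd u hu v h' ha
  · exact absurd ⟨v, h', ha⟩ (hno u hu)

/-- The link hypotheses for a component `S` of `H` minus at most two vertices. -/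
theorem TriComp.linkHyp (h : TriComp G H T) {R : Set V} {s : V} (hs : s ∈ H \ R) (hR : R ⊆ H)
    (hRne : R.Nonempty) (hRc : R.ncard ≤ 2)
    (hsub : ∀ x ∈ H, x ∉ R → (G.neighborSet x ∩ R).Subsingleton)
    (h3 : ∀ x ∈ H, 3 ≤ (G.neighborSet x ∩ H).ncard + ind (attach G T) x) (ht : t ∉ H) :
    LinkHyp G (comp G (H \ R) s) (attach G R) (attach G T) t := by
  have hKR : comp G (H \ R) s ⊆ H \ R := comp_subset
  have hKH : comp G (H \ R) s ⊆ H := hKR.trans Set.sdiff_subset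
  have hbd : ∀ u ∈ comp G (H \ R) s, ∀ v ∈ H, G.Adj u v → v ∈ comp G (H \ R) s ∨ v ∈ R := by
    intro u hu v hv ha
    by_cases hvR : v ∈ R
    exacts [.inr hvR, .inl (comp_closed u hu v ⟨hv, hvR⟩ ha)]
  have hne : (comp G (H \ R) s).Nonempty := ⟨s, mem_comp_self hs⟩
  refine ⟨comp_conn, ?_, ?_, ?_, fun h => absurd (hKH h) ht, ⟨s, mem_comp_self hs, ?_⟩, ?_⟩
  · obtain ⟨r, hr⟩ := hRne
    obtain ⟨r, hr, x, hx, ha⟩ := h.conn.exists_adj ⟨r, hr, hR hr⟩ hKR comp_closed hne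
    exact ⟨x, hx, r, hr.1, ha.symm⟩
  · exact h.exists_attach hKH hne hRc hR hbd
  · intro x hx _
    refine (h3 x (hKH hx)).trans ?_
    have h1 := ncard_split (G := G) (S := H) (K := comp G (H \ R) s) x
    have h2 : (G.neighborSet x ∩ (H \ comp G (H \ R) s)).ncard ≤ ind (attach G R) x := by
      have hsR : G.neighborSet x ∩ (H \ comp G (H \ R) s) ⊆ G.neighborSet x ∩ R :=
        fun y hy => ⟨hy.1, (hbd x hx y hy.2.1 hy.1).resolve_left hy.2.2⟩
      refine Set.Subsingleton.ncard_le_ind ((hsub x (hKH hx) (hKR hx).2).anti hsR) ?_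
      rintro ⟨y, hy⟩
      exact ⟨y, (hsR hy).2, hy.1⟩
    unfold cnt
    omega
  · rintro rfl
    exact ht hs.1
  · intro t' ht' C hC hCne hcl
    by_contra hno
    push Not at hno
    obtain ⟨c, hc, hc'⟩ := h.exists_attach (Z := {t'}) (fun x hx => hKH (hC hx).1) hCne (by simp)
      (by rintro x rfl; exact hKH ht') fun u hu v hv ha => by
        by_cases hvt : v = t'
        · exact .inr hvt
        · rcases hbd u (hC hu).1 v hv ha with h' | h'
          · exact .inl (hcl u hu v ⟨h', hvt⟩ ha)
          · exact absurd ⟨v, h', ha⟩ (hno u hu).1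
    exact (hno c hc).2 hc'

theorem TriComp.consec_of_no_leaf (h : TriComp G H T)
    (hleaf : ∀ z ∈ H, (G.neighborSet z ∩ T).ncard = 3 → (G.neighborSet z ∩ H).ncard ≠ 1) :
    HasConsecCycles G 4 := by
  have h3 : ∀ x ∈ H, 3 ≤ (G.neighborSet x ∩ H).ncard + ind (attach G T) x := fun x hx => by
    have h1 := h.deg hx
    have h2 := h.lab_le (u := x)
    have h4 := hleaf x hx
    by_cases hxA : x ∈ attach G T
    · rw [ind_of_mem hxA]; omega
    · rw [lab_eq_zero hxA] at h1; omega
  obtain ⟨t, htT, htH⟩ := h.exists_T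
  by_cases hm : ∀ x ∈ H, (G.neighborSet x ∩ T).ncard ≤ 1
  · have hdisj : ∀ x ∈ H, (G.neighborSet x ∩ T).ncard ≤
        ind (attach G (T \ {t})) x + ind (attach G {t}) x := fun x hx => by
      by_cases hpos : 0 < (G.neighborSet x ∩ T).ncard
      · obtain ⟨y, hy, hyT⟩ := Set.nonempty_of_ncard_pos hpos
        have := hm x hx
        by_cases hyt : y = t
        · have : x ∈ attach G {t} := ⟨y, hyt, hy⟩
          rw [ind_of_mem this]; omega
        · have : x ∈ attach G (T \ {t}) := ⟨y, ⟨hyT, hyt⟩, hy⟩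
          rw [ind_of_mem this]; omega
      · omega
    have hc : ∀ x ∈ H, 4 ≤ cnt G H (attach G (T \ {t})) (attach G {t}) x := fun x hx => by
      have h1 := h.deg hx
      have h2 := hdisj x hx
      unfold cnt
      omega
    obtain ⟨t', ht', htt'⟩ := Set.exists_ne_of_one_lt_ncard (s := T) (by have := h.card; omega) t
    have hatt : ∀ z ∈ T, ∃ c ∈ H, G.Adj c z := fun z hz =>
      h.h3.attached h.ne h.card.le h.bd hz (Set.disjoint_right.1 h.disj hz)
    have hyp : LinkHyp G H (attach G (T \ {t})) (attach G {t}) t := by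
      refine ⟨h.conn, ?_, ?_, fun s hs _ => (by omega : 3 ≤ 4).trans (hc s hs),
        fun h => absurd h htH, ?_, ?_⟩
      · obtain ⟨c, hc, ha⟩ := hatt t' ht'
        exact ⟨c, hc, t', ⟨ht', htt'⟩, ha⟩
      · obtain ⟨c, hc, ha⟩ := hatt t htT
        exact ⟨c, hc, t, rfl, ha⟩
      · obtain ⟨x, hx⟩ := h.ne
        refine ⟨x, hx, ?_⟩
        rintro rfl
        exact htH hx
      · intro t' ht' C hC hCne hcl
        obtain ⟨c, hc, x, hx, ha⟩ := h.exists_attach (Z := {t'}) (fun x hx => (hC hx).1) hCne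
          (by simp) (by rintro x rfl; exact ht') fun u hu v hv ha => by
            by_cases hvt : v = t'
            exacts [.inr hvt, .inl (hcl u hu v ⟨hv, hvt⟩ ha)]
        refine ⟨c, hc, ?_⟩
        by_cases hxt : x = t
        exacts [.inr ⟨x, hxt, ha⟩, .inl ⟨x, ⟨hx, hxt⟩, ha⟩]
    have hear : ∀ n, Link G H (attach G (T \ {t})) (attach G {t}) n → Ear G H T n := by
      rintro n ⟨a, ⟨x, hx, hax⟩, b, ⟨y, hy, hby⟩, p⟩
      refine ⟨a, b, x, y, hx.1, ?_, ?_, hax, hby, p⟩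
      · rwa [show y = t from hy]
      · rw [show y = t from hy]; exact hx.2
    rcases hyp.concl with ⟨n, h1, h2⟩ | ⟨-, h' | ⟨p, hp, q, -, -, h1, -⟩⟩
    · exact (hear _ h1).consec_three (hear _ h2) h.clique h.disj h.card.ge
    · exact absurd h' htH
    · have := hc p hp
      omega
  push Not at hm
  obtain ⟨v, hv, hv2⟩ := hm
  have hpos : ∀ u ∈ H, 0 < (G.neighborSet u ∩ H).ncard := fun u hu => by
    have := h3 u hu
    have := ind_le_one (A := attach G T) (s := u)
    omega
  obtain ⟨s, hs, hsH⟩ := Set.nonempty_of_ncard_pos (hpos v hv)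
  have hsv : s ∈ H \ {v} := ⟨hsH, fun h => G.loopless.irrefl v (by
    have : G.Adj v s := hs
    rwa [show s = v from h] at this)⟩
  have hyp := h.linkHyp hsv (by rintro x rfl; exact hv) ⟨v, rfl⟩ (by simp)
    (fun x _ _ => Set.subsingleton_singleton.anti Set.inter_subset_right) h3 htH
  set S := comp G (H \ {v}) s with hS
  have hSH : S ⊆ H \ {v} := comp_subset
  have hear : ∀ n, Link G S (attach G {v}) (attach G T) n → Ear G H T (n + 1) := by
    rintro n ⟨a, ⟨x, rfl, hax⟩, b, hb, p⟩
    exact (PathIn.cons hv hax.symm (p.mono hSH)).ear hv2 hb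
  rcases hyp.concl with ⟨n, h1, h2⟩ | ⟨-, h' | ⟨p, hp, q, hq, hpq, hpc, hqc, -⟩⟩
  · exact (hear _ h1).consec_three (hear _ h2) h.clique h.disj h.card.ge
  · exact absurd (hSH h').1 htH
  have hlow : ∀ x ∈ S, cnt G S (attach G {v}) (attach G T) x ≤ 3 →
      2 ≤ (G.neighborSet x ∩ T).ncard ∧ (G.neighborSet x ∩ H).ncard = 2 := fun x hx hxc => by
    have h1 := ncard_split (G := G) (S := H) (K := S) x
    have hsub : G.neighborSet x ∩ (H \ S) ⊆ {v} := fun y hy => by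
      by_contra hyv
      exact hy.2.2 (comp_closed x hx y ⟨hy.2.1, hyv⟩ hy.1)
    have h2 : (G.neighborSet x ∩ (H \ S)).ncard ≤ ind (attach G {v}) x := by
      refine Set.Subsingleton.ncard_le_ind (Set.subsingleton_singleton.anti hsub) ?_
      rintro ⟨y, hy⟩
      exact ⟨y, hsub hy, hy.1⟩
    have h4 := h.deg (hSH hx).1
    have h5 := h3 x (hSH hx).1
    unfold cnt at hxc
    by_cases hxA : x ∈ attach G T
    · rw [ind_of_mem hxA] at h5 hxc
      omega
    · rw [lab_eq_zero hxA] at h4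
      omega
  obtain ⟨hp2, hpd⟩ := hlow p hp hpc
  obtain ⟨hq2, hqd⟩ := hlow q hq hqc
  have hpH := (hSH hp).1
  have hqH := (hSH hq).1
  have hqA : q ∈ attach G T := mem_attach_of_pos (by omega)
  have hpA : p ∈ attach G T := mem_attach_of_pos (by omega)
  by_cases hcom : ∃ s ∈ H, G.Adj s p ∧ G.Adj s q
  · obtain ⟨s, hs, hsp, hsq⟩ := hcom
    have e0 : Ear G H T 0 := (PathIn.nil hpH).ear hp2 hpA
    have e2 : Ear G H T (0 + 2) := (PathIn.cons (n := 1) hpH hsp.symm (.cons (n := 0)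
      ⟨hs, hsp.ne⟩ hsq (.nil ⟨⟨hqH, hpq.ne'⟩, hsq.ne'⟩))).ear hp2 hqA
    exact e0.consec_three e2 h.clique h.disj h.card.ge
  push Not at hcom
  obtain ⟨s, ⟨hsp, hs⟩, hsq⟩ := Set.exists_ne_of_one_lt_ncard (s := G.neighborSet p ∩ H)
    (by omega) q
  have hsp' : G.Adj p s := hsp
  have hyp2 := h.linkHyp (R := {p, q}) (s := s)
    ⟨hs, by rintro (h' | h'); exacts [hsp'.ne' h', hsq h']⟩
    (by rintro x (rfl | rfl) <;> assumption) ⟨p, .inl rfl⟩ (Set.ncard_pair_le p q) ?_ h3 htH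
  · obtain ⟨n, d, hd, l1, l2⟩ := hyp2.exists_link
    have hear2 : ∀ n, Link G (comp G (H \ {p, q}) s) (attach G {p, q}) (attach G T) n →
        Ear G H T (n + 1) ∧ Ear G H T (n + 2) := by
      rintro n ⟨a, ⟨x, rfl | rfl, hax⟩, b, hb, r⟩
      · exact ⟨(PathIn.cons hpH hax.symm (r.mono fun y hy => ⟨(comp_subset hy).1,
          fun h => (comp_subset hy).2 (.inl h)⟩)).ear hp2 hb, (PathIn.cons hqH hpq.symm (.cons
          ⟨hpH, hpq.ne⟩ hax.symm (r.mono fun y hy => ⟨⟨(comp_subset hy).1,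
          fun h => (comp_subset hy).2 (.inr h)⟩,
          fun h => (comp_subset hy).2 (.inl h)⟩))).ear hq2 hb⟩
      · exact ⟨(PathIn.cons hqH hax.symm (r.mono fun y hy => ⟨(comp_subset hy).1,
          fun h => (comp_subset hy).2 (.inr h)⟩)).ear hq2 hb, (PathIn.cons hpH hpq (.cons
          ⟨hqH, hpq.ne'⟩ hax.symm (r.mono fun y hy => ⟨⟨(comp_subset hy).1,
          fun h => (comp_subset hy).2 (.inl h)⟩,
          fun h => (comp_subset hy).2 (.inr h)⟩))).ear hp2 hb⟩
    obtain ⟨m1, m2⟩ := hear2 _ l1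
    obtain ⟨m3, m4⟩ := hear2 _ l2
    refine m1.consec_three (?_ : Ear G H T (n + 1 + 2)) h.clique h.disj h.card.ge
    rcases hd with rfl | rfl
    exacts [m4, m3]
  · rintro x hx hxR y ⟨hy, hy'⟩ z ⟨hz, hz'⟩
    rcases hy' with rfl | rfl <;> rcases hz' with rfl | rfl
    · rfl
    · exact absurd hz (hcom x hx hy)
    · exact absurd hy (hcom x hx hz)
    · rfl

theorem TriComp.consec_of_leaf (h : TriComp G H T) (hcard : 6 ≤ Nat.card V) {z : V} (hz : z ∈ H)
    (hz3 : (G.neighborSet z ∩ T).ncard = 3) (hz1 : (G.neighborSet z ∩ H).ncard = 1) :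
    HasConsecCycles G 4 := by
  have hfull : ∀ x, (G.neighborSet x ∩ T).ncard = 3 → ∀ y ∈ T, G.Adj x y := fun x hx y hy => by
    have := Set.eq_of_subset_of_ncard_le (Set.inter_subset_right (s := G.neighborSet x) (t := T))
      (by rw [hx, h.card])
    rw [← this] at hy
    exact hy.1
  have hclq : ∀ (X : Set V) x, x ∉ X → G.IsClique X → (∀ y ∈ X, G.Adj x y) →
      G.IsClique (insert x X) ∧ (insert x X).ncard = X.ncard + 1 := fun X x hx hX hadj =>
    ⟨hX.insert fun y hy _ => hadj y hy, Set.ncard_insert_of_notMem hx⟩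
  have hnT : ∀ x ∈ H, x ∉ T := fun x hx => Set.disjoint_left.1 h.disj hx
  obtain ⟨hX4, hX4c⟩ := hclq T z (hnT z hz) h.clique (hfull z hz3)
  rw [h.card] at hX4c
  obtain ⟨a, ha⟩ := Set.ncard_eq_one.1 hz1
  have haz : a ∈ G.neighborSet z ∩ H := by rw [ha]; rfl
  have hzN : ∀ y ∈ H, G.Adj z y → y = a := fun y hy hzy => by
    have : y ∈ G.neighborSet z ∩ H := ⟨hzy, hy⟩
    rw [ha] at this
    exact this
  have hza : G.Adj z a := haz.1
  have haH := haz.2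
  have haR : a ∈ H \ {z} := ⟨haH, hza.ne'⟩
  have hR : Conn G (H \ {z}) := h.conn.sdiff haH (by rintro x rfl; exact ⟨hz, hza.ne⟩) (by
    rintro u rfl v hv huv
    exact absurd (hzN v hv.1 huv) hv.2)
  have hRbd : ∀ u ∈ H \ {z}, ∀ v ∈ H, G.Adj u v → v ∈ H \ {z} ∨ v ∈ ({z} : Set V) :=
    fun u _ v hv _ => by
      by_cases hvz : v = z
      exacts [.inr hvz, .inl ⟨hv, hvz⟩]
  have hRd : Disjoint (H \ {z}) (insert z T) := by
    rw [Set.disjoint_left]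
    rintro x hx (hx' | hx')
    exacts [hx.2 hx', hnT x hx.1 hx']
  obtain ⟨t, htT, htH⟩ := h.exists_T
  by_cases hex : ∃ e ∈ H \ {z}, (G.neighborSet e ∩ T).ncard = 3 ∧ (G.neighborSet e ∩ H).ncard = 1
  · obtain ⟨e, ⟨heH, hez⟩, he3, he1⟩ := hex
    have hez' : e ≠ z := hez
    obtain ⟨a', ha'⟩ := Set.ncard_eq_one.1 he1
    have hae : a' ∈ G.neighborSet e ∩ H := by rw [ha']; rfl
    have heN : ∀ y ∈ H, G.Adj e y → y = a' := fun y hy hey => by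
      have : y ∈ G.neighborSet e ∩ H := ⟨hey, hy⟩
      rw [ha'] at this
      exact this
    have hea : G.Adj e a' := hae.1
    by_cases haz' : a' = z
    · have haea : a = e := (hzN e heH (haz' ▸ hea.symm)).symm
      have hHeq : {z, e} = H := h.conn _ (by rintro x (rfl | rfl) <;> assumption) ⟨z, .inl rfl⟩ (by
        rintro u (rfl | rfl) v hv huv
        · right; rw [← haea]; exact hzN v hv huv
        · left; rw [← haz']; exact heN v hv huv)
      have heX : e ∉ insert z T := by
        rintro (h' | h')
        exacts [hez h', hnT e heH h']
      obtain ⟨hX5, hX5c⟩ := hclq (insert z T) e heX hX4 (by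
        rintro y (rfl | hy)
        · rw [← haz']; exact hea
        · exact hfull e he3 y hy)
      obtain ⟨v, hv⟩ : ∃ v, v ∉ insert e (insert z T) := by
        by_contra hall
        push Not at hall
        have := Set.ncard_univ V
        rw [← Set.eq_univ_of_forall hall] at this
        omega
      have hvT : v ∈ Tᶜ := fun h' => hv (.inr (.inr h'))
      have hCT : comp G Tᶜ v ⊆ Tᶜ := comp_subset
      have hcl : ClosedIn G H Tᶜ := fun u hu v hv ha => (h.bd u hu v ha).resolve_right hv
      have hCH : ∀ y ∈ comp G Tᶜ v, y ∉ H := by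
        rintro y ⟨n, p⟩ hy
        have := hcl.path p.symm subset_rfl hy
        rw [← hHeq] at this
        rcases this with h' | h'
        exacts [hv (.inr (.inl h')), hv (.inl h')]
      have hatt : ∀ z ∈ T, ∃ c ∈ comp G Tᶜ v, G.Adj c z := fun z hz => by
        refine h.h3.attached ⟨v, mem_comp_self hvT⟩ h.card.le ?_ hz fun h => hCT h hz
        intro u hu x ha
        by_cases hxT : x ∈ T
        exacts [.inr hxT, .inl (comp_closed u hu x hxT ha)]
      obtain ⟨t', ht', htt'⟩ := Set.exists_ne_of_one_lt_ncard (s := T) (by have := h.card; omega) t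
      obtain ⟨c, hc, hct⟩ := hatt t htT
      obtain ⟨c', hc', hct'⟩ := hatt t' ht'
      obtain ⟨n, p⟩ := (comp_conn (G := G) (S := Tᶜ) (v := v)).path hc hc'
      have hear : Ear G (comp G Tᶜ v) (insert e (insert z T)) n :=
        ⟨c, c', t, t', .inr (.inr htT), .inr (.inr ht'), htt'.symm, hct, hct', p⟩
      refine hear.consec_five hX5 ?_ (by omega)
      rw [Set.disjoint_left]
      rintro x hx (rfl | rfl | hx')
      exacts [hCH x hx heH, hCH x hx hz, hCT hx hx']
    · have hea' : e ≠ a := fun h' => haz' (heN z hz (h' ▸ hza.symm)).symm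
      have hR2 : Conn G ((H \ {z}) \ {e}) := hR.sdiff ⟨hae.2, haz'⟩
        (by rintro x rfl; exact ⟨⟨heH, hez⟩, hea.ne⟩) (by
          rintro u rfl v hv huv
          exact absurd (heN v hv.1.1 huv) hv.2)
      have haR2 : a ∈ (H \ {z}) \ {e} := ⟨haR, hea'.symm⟩
      obtain ⟨c, hc, t1, ht1, hct1⟩ := h.exists_attach (C := (H \ {z}) \ {e}) (Z := {z, e})
        (fun x hx => hx.1.1) ⟨a, haR2⟩ (Set.ncard_pair_le _ _)
        (by rintro x (rfl | rfl) <;> assumption) (fun u hu v hv huv => by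
          by_cases h1 : v = z
          · exact .inr (.inl h1)
          · by_cases h2 : v = e
            exacts [.inr (.inr h2), .inl ⟨⟨hv, h1⟩, h2⟩])
      obtain ⟨n, p⟩ := hR2.path haR2 hc
      have hzT := hnT z hz
      have hzt1 : z ≠ t1 := fun h' => hzT (h' ▸ ht1)
      have hcy : ∀ j, 1 ≤ j → j < 4 → HasCycleLength G (n + j + 2) := fun j h1 h2 =>
        p.cycle_of_clique hX4 (hRd.mono_left Set.sdiff_subset) (.inl rfl) (.inr ht1) hzt1 hza.symm
          hct1 h1 (by omega)
      refine hasConsecCycles_four (n + 1 + 2) (hcy 1 (by omega) (by omega))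
        (hcy 2 (by omega) (by omega)) (hcy 3 (by omega) (by omega)) ?_
      obtain ⟨hX4', hX4c'⟩ := hclq T e (hnT e heH) h.clique (hfull e he3)
      obtain ⟨t2, ht2, ht12⟩ := Set.exists_ne_of_one_lt_ncard (s := T)
        (by have := h.card; omega) t1
      have q : PathIn G (insert e T) t2 t1 3 := hX4'.pathIn (.inr ht2) (.inr ht1) ht12 (by omega)
        (by rw [hX4c', h.card]; omega)
      have q' : PathIn G (insert z (insert e T)) z t1 4 := .cons (.inl rfl) (hfull z hz3 t2 ht2)
        (q.mono fun x hx => ⟨.inr hx, by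
          rintro rfl
          rcases hx with h' | h'
          exacts [hez h'.symm, hzT h']⟩)
      refine p.hasCycleLength q' ?_ hza.symm hct1 (by omega)
      rw [Set.disjoint_left]
      rintro x hx (h' | h' | h')
      exacts [hx.1.2 h', hx.2 h', hnT x hx.1.1 h']
  · push Not at hex
    have hyp : LinkHyp G (H \ {z}) {a} (attach G T) z := by
      refine ⟨hR, ⟨a, haR, rfl⟩, ?_, ?_, fun h' => absurd rfl h'.2, ⟨a, haR, haR.2⟩, ?_⟩
      · exact h.exists_attach Set.sdiff_subset ⟨a, haR⟩ (by simp) (by rintro x rfl; exact hz) hRbd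
      · intro x hx _
        have h1 := h.deg hx.1
        have h2 := h.lab_le (u := x)
        have h4 := hex x hx
        have h5 := ncard_split (G := G) (S := H) (K := H \ {z}) x
        have hsub : G.neighborSet x ∩ (H \ (H \ {z})) ⊆ {z} := fun y hy =>
          (hRbd x hx y hy.2.1 hy.1).resolve_left hy.2.2
        have h6 : (G.neighborSet x ∩ (H \ (H \ {z}))).ncard ≤ ind {a} x := by
          refine Set.Subsingleton.ncard_le_ind (Set.subsingleton_singleton.anti hsub) ?_
          rintro ⟨y, hy⟩
          have hyz : y = z := hsub hy
          exact hzN x hx.1 (hyz ▸ hy.1.symm)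
        unfold cnt
        by_cases hxA : x ∈ attach G T
        · rw [ind_of_mem hxA]; omega
        · rw [lab_eq_zero hxA] at h1; omega
      · intro t' ht' C hC hCne hcl
        by_contra hno
        push Not at hno
        obtain ⟨c, hc, hc'⟩ := h.exists_attach (Z := {t'}) (fun x hx => (hC hx).1.1) hCne (by simp)
          (by rintro x rfl; exact ht'.1) fun u hu v hv ha => by
            by_cases hvt : v = t'
            · exact .inr hvt
            · refine .inl (hcl u hu v ⟨⟨hv, fun hvz => (hno u hu).1 ?_⟩, hvt⟩ ha)
              exact hzN u (hC hu).1.1 (by rw [← show v = z from hvz]; exact ha.symm)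
        exact (hno c hc).2 hc'
    obtain ⟨n, d, hd, l1, l2⟩ := hyp.exists_link
    have hear : ∀ n, Link G (H \ {z}) {a} (attach G T) n → Ear G (H \ {z}) (insert z T) n := by
      rintro n ⟨x, rfl, b, ⟨y, hy, hby⟩, p⟩
      refine ⟨x, b, z, y, .inl rfl, .inr hy, ?_, hza.symm, hby, p⟩
      rintro rfl
      exact hnT z hz hy
    exact (hear _ l1).consec_four (hear _ l2) hd hX4 hRd (by omega)

/-- The case of graphs containing a triangle. -/
theorem hasConsecCycles_of_triangle (h3 : KConnected G 3)
    (hdeg : ∀ v, 4 ≤ (G.neighborSet v).ncard) (hcard : 6 ≤ Nat.card V) {a b c : V}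
    (hab : G.Adj a b) (hac : G.Adj a c) (hbc : G.Adj b c) : HasConsecCycles G 4 := by
  have hT : ({a, b, c} : Set V).ncard = 3 := Set.ncard_eq_three.2
    ⟨a, b, c, hab.ne, hac.ne, hbc.ne, rfl⟩
  have hcl : G.IsClique {a, b, c} := by
    rintro x (rfl | rfl | rfl) y (rfl | rfl | rfl) hxy
    all_goals first | exact absurd rfl hxy | assumption | (apply SimpleGraph.Adj.symm; assumption)
  obtain ⟨v, hv⟩ : ∃ v, v ∉ ({a, b, c} : Set V) := by
    by_contra hall
    push Not at hall
    have := Set.ncard_univ V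
    rw [← Set.eq_univ_of_forall hall] at this
    omega
  have h : TriComp G (comp G {a, b, c}ᶜ v) {a, b, c} := by
    refine ⟨h3, hdeg, hcl, hT, comp_conn, ⟨v, mem_comp_self hv⟩,
      Set.disjoint_left.2 fun x hx => comp_subset hx, fun u hu x ha => ?_⟩
    by_cases hx : x ∈ ({a, b, c} : Set V)
    exacts [.inr hx, .inl (comp_closed u hu x hx ha)]
  by_cases hleaf : ∃ z ∈ comp G {a, b, c}ᶜ v, (G.neighborSet z ∩ {a, b, c}).ncard = 3 ∧
      (G.neighborSet z ∩ comp G {a, b, c}ᶜ v).ncard = 1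
  · obtain ⟨z, hz, h1, h2⟩ := hleaf
    exact h.consec_of_leaf hcard hz h1 h2
  · push Not at hleaf
    exact h.consec_of_no_leaf hleaf

end

/-- The set `X` induces a bipartite subgraph. -/
def Col (G : SimpleGraph V) (X : Set V) : Prop :=
  ∃ f : V → Bool, ∀ u ∈ X, ∀ v ∈ X, G.Adj u v → f u ≠ f v

section

variable {S T X F H : Set V} {u v w x y z : V} {n : ℕ} {f g : V → Bool}

theorem Col.mono (h : Col G X) (hS : S ⊆ X) : Col G S := by
  obtain ⟨f, hf⟩ := h
  exact ⟨f, fun u hu v hv ha => hf u (hS hu) v (hS hv) ha⟩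

theorem Col.colorable (h : Col G Set.univ) : G.Colorable 2 := by
  obtain ⟨f, hf⟩ := h
  exact (Coloring.mk f fun {u v} ha => hf u trivial v trivial ha).colorable

theorem Col.exists_normal (h : Col G X) (x : V) :
    ∃ f : V → Bool, f x = true ∧ ∀ u ∈ X, ∀ v ∈ X, G.Adj u v → f u ≠ f v := by
  obtain ⟨f, hf⟩ := h
  by_cases hx : f x = true
  · exact ⟨f, hx, hf⟩
  · refine ⟨fun v => !f v, by simpa using hx, fun u hu v hv ha => ?_⟩
    simpa using hf u hu v hv ha

theorem Conn.eqOn_of_colorings (hS : Conn G S) (hf : ∀ u ∈ S, ∀ v ∈ S, G.Adj u v → f u ≠ f v)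
    (hg : ∀ u ∈ S, ∀ v ∈ S, G.Adj u v → g u ≠ g v) (hx : x ∈ S) (hfg : f x = g x)
    (hy : y ∈ S) : f y = g y := by
  have : {v ∈ S | f v = g v} = S := by
    refine hS _ (fun v hv => hv.1) ⟨x, hx, hfg⟩ fun u hu v hv ha => ⟨hv, ?_⟩
    have h1 := hf u hu.1 v hv ha
    have h2 := hg u hu.1 v hv ha
    have h3 := hu.2
    revert h1 h2 h3
    generalize f u = a, f v = b, g u = c, g v = d
    revert a b c d
    decide
  rw [← this] at hy
  exact hy.2

theorem PathIn.coloring (p : PathIn G S u v n)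
    (hf : ∀ u ∈ S, ∀ v ∈ S, G.Adj u v → f u ≠ f v) (huv : f u ≠ f v) : Odd n := by
  have key : f u = f v ↔ Even n := by
    clear huv
    induction p with
    | nil _ => simp
    | @cons S u x w k hu ha p ih =>
      have h1 := ih fun a ha b hb => hf a ha.1 b hb.1
      have h2 := hf u hu x p.left_mem.1 ha
      rw [Nat.even_add_one, ← h1]
      revert h2
      generalize f u = a, f x = b, f w = c
      revert a b c
      decide
  rw [← Nat.not_even_iff_odd, ← key]
  exact huv

/-- If deleting any one of three attachments of a connected set leaves a bipartite graph, then
the graph is bipartite. -/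
theorem Conn.col_of_three (hS : Conn G S) (hne : S.Nonempty) (hx : x ∉ S)
    (hy : y ∉ S) (hz : z ∉ S) (hSF : S ⊆ F) (hxF : x ∈ F) (hyF : y ∈ F) (hzF : z ∈ F)
    (hxy : x ≠ y) (hxz : x ≠ z) (hyz : y ≠ z) (hxa : ∃ s ∈ S, G.Adj x s)
    (hya : ∃ s ∈ S, G.Adj y s) (hza : ∃ s ∈ S, G.Adj z s) (hxc : Col G (F \ {x}))
    (hyc : Col G (F \ {y})) (hzc : Col G (F \ {z})) : Col G F := by
  obtain ⟨s, hs⟩ := hne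
  obtain ⟨f1, hs1, h1⟩ := hxc.exists_normal s
  obtain ⟨f2, hs2, h2⟩ := hyc.exists_normal s
  obtain ⟨f3, hs3, h3⟩ := hzc.exists_normal s
  have hsub : ∀ w ∉ S, S ⊆ F \ {w} := fun w hw v hv => ⟨hSF hv, fun h => hw (h ▸ hv)⟩
  have agree : ∀ {a b w : V} {f g : V → Bool}, a ∉ S → b ∉ S → w ∈ F → w ≠ a → w ≠ b →
      (∃ s ∈ S, G.Adj w s) → f s = true → g s = true →
      (∀ u ∈ F \ {a}, ∀ v ∈ F \ {a}, G.Adj u v → f u ≠ f v) →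
      (∀ u ∈ F \ {b}, ∀ v ∈ F \ {b}, G.Adj u v → g u ≠ g v) → f w = g w := by
    rintro a b w f g ha hb hw hwa hwb ⟨t, ht, hwt⟩ hfs hgs hf hg
    have e := hS.eqOn_of_colorings (fun u hu v hv => hf u (hsub a ha hu) v (hsub a ha hv))
      (fun u hu v hv => hg u (hsub b hb hu) v (hsub b hb hv)) hs (hfs.trans hgs.symm) ht
    have e1 := hf w ⟨hw, hwa⟩ t (hsub a ha ht) hwt
    have e2 := hg w ⟨hw, hwb⟩ t (hsub b hb ht) hwt
    revert e e1 e2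
    generalize f w = a, f t = b, g w = c, g t = d
    revert a b c d
    decide
  have ex := agree hy hz hxF hxy hxz hxa hs2 hs3 h2 h3
  have ey := agree hx hz hyF hxy.symm hyz hya hs1 hs3 h1 h3
  have ez := agree hx hy hzF hxz.symm hyz.symm hza hs1 hs2 h1 h2
  refine ⟨fun v => (f1 v && f2 v) || (f1 v && f3 v) || (f2 v && f3 v), fun u hu v hv ha => ?_⟩
  have a1 : u = x ∨ v = x ∨ f1 u ≠ f1 v := by
    by_cases hux : u = x
    · exact .inl hux
    · by_cases hvx : v = x
      exacts [.inr (.inl hvx), .inr (.inr (h1 u ⟨hu, hux⟩ v ⟨hv, hvx⟩ ha))]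
  have a2 : u = y ∨ v = y ∨ f2 u ≠ f2 v := by
    by_cases hux : u = y
    · exact .inl hux
    · by_cases hvx : v = y
      exacts [.inr (.inl hvx), .inr (.inr (h2 u ⟨hu, hux⟩ v ⟨hv, hvx⟩ ha))]
  have a3 : u = z ∨ v = z ∨ f3 u ≠ f3 v := by
    by_cases hux : u = z
    · exact .inl hux
    · by_cases hvx : v = z
      exacts [.inr (.inl hvx), .inr (.inr (h3 u ⟨hu, hux⟩ v ⟨hv, hvx⟩ ha))]
  have huv := ha.ne
  have b1 : u = x → f2 u = f3 u := by rintro rfl; exact ex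
  have b2 : u = y → f1 u = f3 u := by rintro rfl; exact ey
  have b3 : u = z → f1 u = f2 u := by rintro rfl; exact ez
  have c1 : v = x → f2 v = f3 v := by rintro rfl; exact ex
  have c2 : v = y → f1 v = f3 v := by rintro rfl; exact ey
  have c3 : v = z → f1 v = f2 v := by rintro rfl; exact ez
  have d1 : u = x → v ≠ x := fun h h' => huv (h.trans h'.symm)
  have d2 : u = y → v ≠ y := fun h h' => huv (h.trans h'.symm)
  have d3 : u = z → v ≠ z := fun h h' => huv (h.trans h'.symm)
  have k1 : u = x → u ≠ y := fun h h' => hxy (h.symm.trans h')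
  have k2 : u = x → u ≠ z := fun h h' => hxz (h.symm.trans h')
  have k3 : u = y → u ≠ z := fun h h' => hyz (h.symm.trans h')
  have l1 : v = x → v ≠ y := fun h h' => hxy (h.symm.trans h')
  have l2 : v = x → v ≠ z := fun h h' => hxz (h.symm.trans h')
  have l3 : v = y → v ≠ z := fun h h' => hyz (h.symm.trans h')
  have hno : ¬ ((u = x ∨ v = x) ∧ (u = y ∨ v = y) ∧ (u = z ∨ v = z)) := by
    rintro ⟨h | h, h' | h', h'' | h''⟩ <;> first
      | exact k1 h h'
      | exact l1 h h'
      | exact k2 h h''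
      | exact l2 h h''
      | exact k3 h' h''
      | exact l3 h' h''
  clear ex ey ez agree h1 h2 h3 hs1 hs2 hs3 k1 k2 k3 l1 l2 l3
  dsimp only
  generalize f1 u = p1 at *
  generalize f2 u = p2 at *
  generalize f3 u = p3 at *
  generalize f1 v = q1 at *
  generalize f2 v = q2 at *
  generalize f3 v = q3 at *
  cases p1 <;> cases p2 <;> cases p3 <;> cases q1 <;> cases q2 <;> cases q3 <;> simp_all

theorem PathIn.exists_seq (p : PathIn G S u v n) : ∃ g : ℕ → V, g 0 = u ∧ g n = v ∧
    (∀ i < n, G.Adj (g i) (g (i + 1))) ∧ (∀ i ≤ n, g i ∈ S) ∧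
    ∀ i ≤ n, ∀ j ≤ n, g i = g j → i = j := by
  induction p with
  | @nil S u hu => exact ⟨fun _ => u, rfl, rfl, by simp, fun _ _ => hu, fun i hi j hj _ => by omega⟩
  | @cons S u x w k hu ha p ih =>
    obtain ⟨g, h0, h1, h2, h3, h4⟩ := ih
    refine ⟨fun i => Nat.casesOn i u g, rfl, h1, ?_, ?_, ?_⟩
    · rintro (_ | i) hi
      · change G.Adj u (g 0)
        rwa [h0]
      · exact h2 i (by omega)
    · rintro (_ | i) hi
      exacts [hu, (h3 i (by omega)).1]
    · rintro (_ | i) hi (_ | j) hj hij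
      · rfl
      · exact absurd (show g j = u from hij.symm) (h3 j (by omega)).2
      · exact absurd (show g i = u from hij) (h3 i (by omega)).2
      · rw [h4 i (by omega) j (by omega) hij]

/-- A non-bipartite set whose bipartiteness is restored by deleting `w` contains an odd cycle,
given as a periodic sequence. -/
theorem exists_odd_cycle (hX : ¬ Col G X) (hw : w ∈ X) (hc : Col G (X \ {w})) :
    ∃ (s : ℕ) (c : ℤ → V), 1 ≤ s ∧ (∀ i, c i ∈ X) ∧ (∀ i, G.Adj (c i) (c (i + 1))) ∧
      ∀ i j, c i = c j ↔ ((2 * s + 1 : ℕ) : ℤ) ∣ i - j := by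
  obtain ⟨f, hf⟩ := hc
  have hF : ∀ v ∈ X, v ≠ w → v ∈ X \ {w} := fun v hv h => ⟨hv, h⟩
  obtain ⟨u, hu, v, hv, l, p, hwu, hwv, hne⟩ : ∃ u ∈ X \ {w}, ∃ v ∈ X \ {w}, ∃ l,
      PathIn G (X \ {w}) u v l ∧ G.Adj w u ∧ G.Adj w v ∧ f u ≠ f v := by
    by_contra hno
    push Not at hno
    refine hX ?_
    classical
    let P : V → Prop := fun v => ∃ u ∈ X \ {w}, G.Adj w u ∧ v ∈ comp G (X \ {w}) u ∧ f u = true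
    have hw' : ∀ v ∈ X, G.Adj w v → (if P v then !f v else f v) = false := by
      intro v hv ha
      have hvF := hF v hv ha.ne'
      split_ifs with hP
      · obtain ⟨u, hu, hwu, ⟨m, q⟩, hfu⟩ := hP
        rw [← hno u hu v hvF m q hwu ha, hfu]
        rfl
      · by_contra hfv
        exact hP ⟨v, hvF, ha, mem_comp_self hvF, by simpa using hfv⟩
    refine ⟨fun v => if v = w then true else if P v then !f v else f v, fun a ha b hb hab => ?_⟩
    dsimp only
    by_cases haw : a = w
    · subst haw
      rw [if_pos rfl, if_neg hab.ne', hw' b hb hab]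
      decide
    · by_cases hbw : b = w
      · subst hbw
        rw [if_pos rfl, if_neg hab.ne, hw' a ha hab.symm]
        decide
      · rw [if_neg haw, if_neg hbw]
        have hP : P a ↔ P b :=
          ⟨fun ⟨u, h1, h2, h3, h4⟩ => ⟨u, h1, h2, comp_closed a h3 b (hF b hb hbw) hab, h4⟩,
            fun ⟨u, h1, h2, h3, h4⟩ =>
              ⟨u, h1, h2, comp_closed b h3 a (hF a ha haw) hab.symm, h4⟩⟩
        have := hf a (hF a ha haw) b (hF b hb hbw) hab
        by_cases hPa : P a
        · rw [if_pos hPa, if_pos (hP.1 hPa)]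
          simpa using this
        · rw [if_neg hPa, if_neg fun h => hPa (hP.2 h)]
          exact this
  obtain ⟨r, rfl⟩ := p.coloring hf hne
  obtain ⟨g, h0, h1, h2, h3, h4⟩ := (PathIn.cons hw hwu p).exists_seq
  have hpos : (0 : ℤ) < ((2 * (r + 1) + 1 : ℕ) : ℤ) := by positivity
  have hmod : ∀ i : ℤ, 0 ≤ i % ((2 * (r + 1) + 1 : ℕ) : ℤ) ∧
      i % ((2 * (r + 1) + 1 : ℕ) : ℤ) < ((2 * (r + 1) + 1 : ℕ) : ℤ) := fun i =>
    ⟨Int.emod_nonneg _ hpos.ne', Int.emod_lt_of_pos _ hpos⟩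
  refine ⟨r + 1, fun i => g (i % ((2 * (r + 1) + 1 : ℕ) : ℤ)).toNat, by omega, ?_, ?_, ?_⟩
  · intro i
    have := hmod i
    exact h3 _ (by omega)
  · intro i
    have e1 := hmod i
    have e2 := hmod (i + 1)
    have e3 := Int.emod_add_emod i ((2 * (r + 1) + 1 : ℕ) : ℤ) 1
    dsimp only
    by_cases hlast : i % ((2 * (r + 1) + 1 : ℕ) : ℤ) + 1 = ((2 * (r + 1) + 1 : ℕ) : ℤ)
    · rw [hlast, Int.emod_self] at e3
      rw [← e3]
      have : (i % ((2 * (r + 1) + 1 : ℕ) : ℤ)).toNat = 2 * r + 1 + 1 := by omega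
      rw [this, h1, Int.toNat_zero, h0]
      exact hwv.symm
    · rw [Int.emod_eq_of_lt (by omega) (by omega)] at e3
      rw [← e3, Int.toNat_add e1.1 (by norm_num)]
      exact h2 _ (by omega)
  · intro i j
    have e1 := hmod i
    have e2 := hmod j
    rw [Int.dvd_iff_emod_eq_zero, ← Int.emod_eq_emod_iff_emod_sub_eq_zero]
    constructor
    · intro h
      have := h4 _ (by omega) _ (by omega) h
      omega
    · intro h
      dsimp only
      rw [h]

/-- A triangle-free graph together with a chordless odd cycle whose complement `H` is connected
and as large as possible among connected sets with non-bipartite complement. -/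
structure CycleSetup (G : SimpleGraph V) (H : Set V) (c : ℤ → V) (s : ℕ) : Prop where
  tf : ∀ x y z, G.Adj x y → G.Adj x z → ¬ G.Adj y z
  h3 : KConnected G 3
  hdeg : ∀ v, 4 ≤ (G.neighborSet v).ncard
  conn : Conn G H
  max : ∀ K, Conn G K → H.ncard < K.ncard → Col G Kᶜ
  two_le : 2 ≤ s
  inj : ∀ i j, c i = c j ↔ ((2 * s + 1 : ℕ) : ℤ) ∣ i - j
  adj : ∀ i, G.Adj (c i) (c (i + 1))
  notMem : ∀ i, c i ∉ H
  surj : ∀ x ∉ H, ∃ i, c i = x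
  nbr : ∀ i, ∀ x ∉ H, G.Adj (c i) x → x = c (i + 1) ∨ x = c (i - 1)

theorem arc_coloring {c : ℤ → V} (hc : ∀ i, G.Adj (c i) (c (i + 1)))
    (hf : ∀ u ∈ X, ∀ v ∈ X, G.Adj u v → f u ≠ f v) (i : ℤ) (d : ℕ)
    (hX : ∀ k : ℕ, k ≤ d → c (i + k) ∈ X) : f (c i) = f (c (i + d)) ↔ Even d := by
  induction d with
  | zero => simp
  | succ d ih =>
    have h1 := ih fun k hk => hX k (by omega)
    have h2 := hf _ (hX d (by omega)) _ (hX (d + 1) le_rfl) (by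
      have := hc (i + d); push_cast; rwa [← add_assoc])
    rw [Nat.even_add_one, ← h1]
    revert h2
    generalize f (c (i + d)) = a, f (c (i + (d + 1 : ℕ))) = b, f (c i) = e
    revert a b e
    decide

variable [Finite V]

theorem exists_cycleSetup (tf : ∀ x y z, G.Adj x y → G.Adj x z → ¬ G.Adj y z)
    (h3 : KConnected G 3) (hdeg : ∀ v, 4 ≤ (G.neighborSet v).ncard) (hnb : ¬ G.Colorable 2) :
    ∃ H c s, CycleSetup G H c s := by
  have hnc : ¬ Col G Set.univ := fun h => hnb h.colorable
  obtain ⟨H, ⟨hconn, hH⟩, hmax'⟩ := Set.exists_max_image {H : Set V | Conn G H ∧ ¬ Col G Hᶜ}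
    Set.ncard (Set.toFinite _) ⟨∅, fun T hT _ _ => Set.subset_empty_iff.1 hT, by simpa using hnc⟩
  have hmax : ∀ K, Conn G K → H.ncard < K.ncard → Col G Kᶜ := fun K hK hlt => by
    by_contra hcon
    exact absurd (hmax' K ⟨hK, hcon⟩) (by omega)
  have three : ∀ Z : Set V, 3 ≤ Z.ncard → ∃ x y z, x ∈ Z ∧ y ∈ Z ∧ z ∈ Z ∧ x ≠ y ∧ x ≠ z ∧ y ≠ z :=
    fun Z hZ => by
      obtain ⟨x, y, z, h⟩ := (Set.two_lt_ncard_iff (Set.toFinite Z)).1 hZ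
      exact ⟨x, y, z, h⟩
  have hne : H.Nonempty := by
    by_contra hemp
    rw [Set.not_nonempty_iff_eq_empty] at hemp
    obtain ⟨w, -⟩ : ∃ w, w ∈ Hᶜ := by
      by_contra hno
      push Not at hno
      exact hH ⟨fun _ => true, fun u hu => absurd hu (hno u)⟩
    obtain ⟨x, y, z, hx, hy, hz, hxy, hxz, hyz⟩ := three (G.neighborSet w)
      ((by omega : 3 ≤ 4).trans (hdeg w))
    have hcol : ∀ x, Col G (Set.univ \ {x}) := fun x => by
      rw [← Set.compl_eq_univ_sdiff]
      exact hmax {x} conn_singleton (by rw [hemp]; simp)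
    have hn : ∀ x, G.Adj w x → x ∉ ({w} : Set V) := fun x hx h => hx.ne' h
    exact hnc ((conn_singleton (G := G) (v := w)).col_of_three ⟨w, rfl⟩ (hn x hx) (hn y hy) (hn z hz)
      (Set.subset_univ _) trivial trivial trivial hxy hxz hyz ⟨w, rfl, hx.symm⟩ ⟨w, rfl, hy.symm⟩
      ⟨w, rfl, hz.symm⟩ (hcol x) (hcol y) (hcol z))
  have hdel : ∀ x ∉ H, (∃ h ∈ H, G.Adj x h) → Col G (Hᶜ \ {x}) := fun x hx ha => by
    refine (hmax _ (hconn.insert ha) ?_).mono ?_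
    · rw [Set.ncard_insert_of_notMem hx]; omega
    · rintro y ⟨h1, h2⟩ (h | h)
      exacts [h2 h, h1 h]
  have hall : ∀ w ∉ H, ∃ h ∈ H, G.Adj w h := by
    by_contra hno
    push Not at hno
    obtain ⟨w, hwH, hw⟩ := hno
    let Y : Set V := {v | v ∉ H ∧ ∀ h ∈ H, ¬ G.Adj v h}
    have hwY : w ∈ Y := ⟨hwH, hw⟩
    have hSY : comp G Y w ⊆ Y := comp_subset
    let Z : Set V := {v | (v ∉ H ∧ ∃ h ∈ H, G.Adj v h) ∧ ∃ s ∈ comp G Y w, G.Adj v s}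
    obtain ⟨h0, hh0⟩ := hne
    have hZ : 3 ≤ Z.ncard := by
      by_contra hlt
      refine h3.not_sep (C := comp G Y w) (Z := Z) (w := h0) ⟨w, mem_comp_self hwY⟩ (by omega) ?_
        (fun h => (hSY h).1 hh0) fun h => h.1.1 hh0
      intro u hu v ha
      by_cases hvH : v ∈ H
      · exact absurd ha ((hSY hu).2 v hvH)
      · by_cases hvY : v ∈ Y
        · exact .inl (comp_closed u hu v hvY ha)
        · refine .inr ⟨⟨hvH, ?_⟩, u, hu, ha.symm⟩
          by_contra hcon
          push Not at hcon
          exact hvY ⟨hvH, hcon⟩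
    obtain ⟨x, y, z, hx, hy, hz, hxy, hxz, hyz⟩ := three Z hZ
    have hn : ∀ x ∈ Z, x ∉ comp G Y w := fun x hx h => by
      obtain ⟨h', hh', ha⟩ := hx.1.2
      exact (hSY h).2 h' hh' ha
    exact hH ((comp_conn (G := G) (S := Y) (v := w)).col_of_three ⟨w, mem_comp_self hwY⟩ (hn x hx)
      (hn y hy) (hn z hz) (fun v hv => (hSY hv).1) hx.1.1 hy.1.1 hz.1.1 hxy hxz hyz hx.2 hy.2 hz.2
      (hdel x hx.1.1 hx.1.2) (hdel y hy.1.1 hy.1.2) (hdel z hz.1.1 hz.1.2))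
  have hdel' : ∀ x ∉ H, Col G (Hᶜ \ {x}) := fun x hx => hdel x hx (hall x hx)
  obtain ⟨w, hw⟩ : ∃ w, w ∈ Hᶜ := by
    by_contra hno
    push Not at hno
    exact hH ⟨fun _ => true, fun u hu => absurd hu (hno u)⟩
  obtain ⟨s, c, hs, hcH, hadj, hinj⟩ := exists_odd_cycle hH hw (hdel' w hw)
  have hper : ∀ i, c (i + (2 * s + 1 : ℕ)) = c i := fun i => (hinj _ _).2 (by simp)
  have hs2 : 2 ≤ s := by
    by_contra hlt
    have hs1 : s = 1 := by omega
    subst hs1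
    refine tf (c 0) (c 1) (c 2) (hadj 0) ?_ (hadj 1)
    have := (hadj 2).symm
    have e : c (2 + 1) = c 0 := by simpa using hper 0
    rwa [e] at this
  have hsurj : ∀ x ∉ H, ∃ i, c i = x := by
    intro x hx
    by_contra hno
    push Not at hno
    obtain ⟨f, hf⟩ := hdel' x hx
    have := (arc_coloring hadj hf 0 (2 * s + 1) fun k _ => ⟨hcH _, hno _⟩).1 (by rw [hper])
    exact absurd this (by simp)
  have hchord : ∀ (i : ℤ) (d : ℕ), Even d → d + 1 < 2 * s + 1 → ¬ G.Adj (c i) (c (i + d)) := by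
    intro i d hd hlt ha
    obtain ⟨f, hf⟩ := hdel' (c (i + (d + 1 : ℕ))) (hcH _)
    have hmem : ∀ k : ℕ, k ≤ d → c (i + k) ∈ Hᶜ \ {c (i + (d + 1 : ℕ))} := fun k hk => by
      refine ⟨hcH _, fun h => ?_⟩
      have h := (hinj _ _).1 h
      rw [← dvd_neg] at h
      have := Int.le_of_dvd (by push_cast; omega) h
      push_cast at this
      omega
    have h1 := (arc_coloring hadj hf i d hmem).2 hd
    exact hf _ (by simpa using hmem 0 (by omega)) _ (hmem d le_rfl) ha h1
  refine ⟨H, c, s, tf, h3, hdeg, hconn, hmax, hs2, hinj, hadj, hcH, hsurj, ?_⟩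
  intro i x hx ha
  obtain ⟨j, rfl⟩ := hsurj x hx
  have hpos : (0 : ℤ) < ((2 * s + 1 : ℕ) : ℤ) := by positivity
  have e1 := Int.emod_nonneg (j - i) hpos.ne'
  have e2 := Int.emod_lt_of_pos (j - i) hpos
  obtain ⟨d, hd⟩ := Int.eq_ofNat_of_zero_le e1
  have hj : c j = c (i + d) := by
    rw [hinj]
    have : j - (i + d) = (j - i) - (j - i) % ((2 * s + 1 : ℕ) : ℤ) := by rw [hd]; ring
    rw [this]
    exact Int.dvd_self_sub_emod
  have hdn : d < 2 * s + 1 := by omega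
  rw [hj] at ha ⊢
  rcases Nat.even_or_odd d with hev | hodd
  · by_cases hlt : d + 1 < 2 * s + 1
    · exact absurd ha (hchord i d hev hlt)
    · right
      rw [hinj]
      have : d = 2 * s := by omega
      rw [this]
      push_cast
      exact ⟨1, by ring⟩
  · by_cases hd1 : d = 1
    · left; rw [hd1]; rfl
    · refine absurd ha.symm ?_
      have h5 : i + d + ((2 * s + 1 - d : ℕ) : ℤ) = i + (2 * s + 1 : ℕ) := by omega
      have := hchord (i + d) (2 * s + 1 - d) ?_ ?_
      · rwa [h5, hper] at this
      · rw [Nat.even_sub' hdn.le]; simp [hodd]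
      · obtain ⟨k, rfl⟩ := hodd
        omega

end

section

variable {S T K D Q H R X : Set V} {a b p q u v w x y t u' w' : V} {l m n d : ℕ} {c : ℤ → V}
  {i j : ℤ} {s : ℕ}

theorem conn_of_forall_mem (h : ∀ T ⊆ S, T.Nonempty → ClosedIn G T S → p ∈ T) : Conn G S := by
  intro T hT hne hc
  refine hT.antisymm fun x hx => ?_
  by_contra hxT
  exact (h (S \ T) Set.sdiff_subset ⟨x, hx, hxT⟩ hc.sdiff).2 (h T hT hne hc)

theorem Conn.sdiff_pair (h : Conn G S) (hp : p ∈ S) (hq : q ∈ S) (hpq : G.Adj p q)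
    (hK : K ⊆ S \ {p, q}) (hc : ClosedIn G K (S \ {p, q})) : Conn G (S \ K) := by
  have hpK : p ∉ K := fun h => (hK h).2 (.inl rfl)
  have hqK : q ∉ K := fun h => (hK h).2 (.inr rfl)
  refine conn_of_forall_mem (p := p) fun T hT hne hcT => ?_
  by_contra hpT
  have hqT : q ∉ T := fun hqT => hpT (hcT q hqT p ⟨hp, hpK⟩ hpq.symm)
  refine hpT ((h T (hT.trans Set.sdiff_subset) hne fun u hu v hv ha => ?_) ▸ hp)
  refine hcT u hu v ⟨hv, fun hvK => (hT hu).2 (hc v hvK u ⟨(hT hu).1, ?_⟩ ha.symm)⟩ ha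
  rintro (rfl | rfl)
  exacts [hpT hu, hqT hu]

namespace CycleSetup

theorem per (h : CycleSetup G H c s) (i : ℤ) : c (i + (2 * s + 1 : ℕ)) = c i :=
  (h.inj _ _).2 (by simp)

theorem eq_of_lt (h : CycleSetup G H c s) {k l : ℕ} (he : c (i + k) = c (i + l))
    (hk : k < 2 * s + 1) (hl : l < 2 * s + 1) : k = l := by
  have h1 := (h.inj _ _).1 he
  have h2 := Int.eq_zero_of_abs_lt_dvd h1 (by rw [abs_lt]; constructor <;> push_cast <;> omega)
  omega

theorem exists_add (h : CycleSetup G H c s) (i j : ℤ) :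
    ∃ d : ℕ, d < 2 * s + 1 ∧ c j = c (i + d) := by
  have hpos : (0 : ℤ) < ((2 * s + 1 : ℕ) : ℤ) := by positivity
  obtain ⟨d, hd⟩ := Int.eq_ofNat_of_zero_le (Int.emod_nonneg (j - i) hpos.ne')
  have hlt := Int.emod_lt_of_pos (j - i) hpos
  refine ⟨d, by omega, ?_⟩
  rw [h.inj]
  have : j - (i + d) = (j - i) - (j - i) % ((2 * s + 1 : ℕ) : ℤ) := by rw [hd]; ring
  rw [this]
  exact Int.dvd_self_sub_emod

theorem arcPath (h : CycleSetup G H c s) (i : ℤ) (hd : d < 2 * s + 1) :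
    PathIn G Hᶜ (c i) (c (i + d)) d := by
  have key : PathIn G {x | ∃ k : ℕ, k ≤ d ∧ x = c (i + k)} (c i) (c (i + d)) d := by
    induction d generalizing i with
    | zero =>
      rw [Nat.cast_zero, add_zero]
      exact .nil ⟨0, le_rfl, by simp⟩
    | succ d ih =>
      have e : i + (d + 1 : ℕ) = i + 1 + d := by push_cast; ring
      rw [e]
      refine .cons ⟨0, by omega, by simp⟩ (h.adj i) ((ih (i + 1) (by omega)).mono ?_)
      rintro x ⟨k, hk, rfl⟩
      have e' : i + 1 + k = i + (k + 1 : ℕ) := by push_cast; ring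
      rw [e']
      refine ⟨⟨k + 1, by omega, rfl⟩, fun he => ?_⟩
      have := h.eq_of_lt (k := k + 1) (l := 0) (by simpa using he) (by omega) (by omega)
      omega
  refine key.mono ?_
  rintro x ⟨k, -, rfl⟩
  exact h.notMem _

theorem cycle (h : CycleSetup G H c s) (p : PathIn G H u v l) (hu : G.Adj u (c i))
    (hv : G.Adj v (c (i + d))) (hd0 : 1 ≤ d) (hd : d ≤ 2 * s) : HasCycleLength G (l + d + 2) :=
  p.hasCycleLength (h.arcPath i (by omega)) disjoint_compl_right hu hv (by omega)

theorem cycle' (h : CycleSetup G H c s) (p : PathIn G H u v l) (hu : G.Adj u (c i))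
    (hv : G.Adj v (c (i + d))) (hd0 : 1 ≤ d) (hd : d ≤ 2 * s) (hn : d + n = 2 * s + 1) :
    HasCycleLength G (l + n + 2) := by
  refine h.cycle p.symm hv (d := n) ?_ (by omega) (by omega)
  have e : i + d + n = i + (2 * s + 1 : ℕ) := by rw [← hn]; push_cast; ring
  rwa [e, h.per]

/-- The attachment sets of antipodal cycle vertices are not joined by paths of lengths `l` and
`l + 2`. -/
theorem not_link (h : CycleSetup G H c s) (hno : ¬ HasConsecCycles G 4)
    (p : PathIn G H u w l) (p' : PathIn G H u' w' (l + 2)) (hu : G.Adj u (c i))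
    (hw : G.Adj w (c (i + s))) (hu' : G.Adj u' (c i)) (hw' : G.Adj w' (c (i + s))) : False := by
  have hs := h.two_le
  refine hno (hasConsecCycles_four (l + s + 2) (h.cycle p hu hw (by omega) (by omega)) ?_ ?_ ?_)
  · have := h.cycle' p hu hw (n := s + 1) (by omega) (by omega) (by omega)
    rwa [show l + s + 2 + 1 = l + (s + 1) + 2 by ring]
  · have := h.cycle p' hu' hw' (by omega) (by omega)
    rwa [show l + s + 2 + 2 = l + 2 + s + 2 by ring]
  · have := h.cycle' p' hu' hw' (n := s + 1) (by omega) (by omega) (by omega)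
    rwa [show l + s + 2 + 3 = l + 2 + (s + 1) + 2 by ring]

theorem not_col_odd (hc : ∀ i, G.Adj (c i) (c (i + 1))) (hv : v ∈ X) (h1 : G.Adj v (c i))
    (h2 : G.Adj v (c (i + d))) (hd : Odd d) (hX : ∀ k : ℕ, k ≤ d → c (i + k) ∈ X) : ¬ Col G X := by
  rintro ⟨f, hf⟩
  have e := arc_coloring hc hf i d hX
  have e1 := hf v hv _ (by simpa using hX 0 (by omega)) h1
  have e2 := hf v hv _ (hX d le_rfl) h2
  refine Nat.not_even_iff_odd.2 hd (e.1 ?_)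
  revert e1 e2
  generalize f v = a, f (c i) = b, f (c (i + d)) = e
  revert a b e
  decide

theorem not_col_even (hc : ∀ i, G.Adj (c i) (c (i + 1))) (hp : p ∈ X) (hq : q ∈ X)
    (hpq : G.Adj p q) (h1 : G.Adj p (c i)) (h2 : G.Adj q (c (i + d))) (hd : Even d)
    (hX : ∀ k : ℕ, k ≤ d → c (i + k) ∈ X) : ¬ Col G X := by
  rintro ⟨f, hf⟩
  have e := (arc_coloring hc hf i d hX).2 hd
  have e0 := hf p hp q hq hpq
  have e1 := hf p hp _ (by simpa using hX 0 (by omega)) h1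
  have e2 := hf q hq _ (hX d le_rfl) h2
  revert e e0 e1 e2
  generalize f p = a, f q = g, f (c i) = b, f (c (i + d)) = e
  revert a b e g
  decide

variable [Finite V]

theorem two_le_nbrs (h : CycleSetup G H c s) (i : ℤ) : 2 ≤ (G.neighborSet (c i) ∩ H).ncard := by
  have hsub : G.neighborSet (c i) ⊆ (G.neighborSet (c i) ∩ H) ∪ {c (i + 1), c (i - 1)} := by
    intro x hx
    by_cases hxH : x ∈ H
    · exact .inl ⟨hx, hxH⟩
    · exact .inr (h.nbr i x hxH hx)
  have h1 := Set.ncard_le_ncard hsub (Set.toFinite _)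
  have h2 := Set.ncard_union_le (G.neighborSet (c i) ∩ H) {c (i + 1), c (i - 1)}
  have h3 := Set.ncard_pair_le (c (i + 1)) (c (i - 1))
  have h4 := h.hdeg (c i)
  omega

theorem exists_nbr_ne (h : CycleSetup G H c s) (i : ℤ) (v : V) :
    ∃ w ∈ H, w ≠ v ∧ G.Adj w (c i) := by
  obtain ⟨w, hw, hne⟩ := Set.exists_ne_of_one_lt_ncard (h.two_le_nbrs i) v
  exact ⟨w, hw.2, hne, hw.1.symm⟩

theorem unique_label_odd (h : CycleSetup G H c s) (hno : ¬ HasConsecCycles G 4) (hv : v ∈ H)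
    (hc : Conn G (H \ {v})) (hi : G.Adj v (c i)) (hj : G.Adj v (c (i + d))) (hd : Odd d)
    (hlt : d < 2 * s + 1) : False := by
  obtain ⟨k, rfl⟩ := hd
  have hs := h.two_le
  by_cases hk : 2 * k + 1 + 2 = 2 * s + 1
  · obtain ⟨w, hw, -, hwa⟩ := h.exists_nbr_ne (i + ((k : ℕ) : ℤ)) v
    obtain ⟨l, p⟩ := h.conn.path hv hw
    have hks : k = s - 1 := by omega
    have hwa' : G.Adj w (c (i + (2 * k + 1 : ℕ) + (s + 1 : ℕ))) := by
      have e : i + (2 * k + 1 : ℕ) + (s + 1 : ℕ) = i + k + (2 * s + 1 : ℕ) := by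
        push_cast; omega
      rwa [e, h.per]
    refine hno (hasConsecCycles_four (l + k + 2) (h.cycle p hi hwa (by omega) (by omega)) ?_ ?_ ?_)
    · have := h.cycle' p hj hwa' (n := k + 1) (by omega) (by omega) (by omega)
      rwa [show l + k + 2 + 1 = l + (k + 1) + 2 by ring]
    · have := h.cycle p hj hwa' (by omega) (by omega)
      rwa [show l + k + 2 + 2 = l + (s + 1) + 2 by omega]
    · have := h.cycle' p hi hwa (n := k + 3) (by omega) (by omega) (by omega)
      rwa [show l + k + 2 + 3 = l + (k + 3) + 2 by ring]
  · set d := 2 * k + 1 with hd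
    refine not_col_odd (X := ((H \ {v}) ∪ {c (i + (d + 1 : ℕ)), c (i + (d + 2 : ℕ))})ᶜ) h.adj ?_ hi
      hj ⟨k, rfl⟩ (fun l hl => ?_) (h.max _ (hc.union ?_) ?_)
    · rintro (hh | hh | hh)
      · exact hh.2 rfl
      · exact h.notMem _ (hh ▸ hv)
      · exact h.notMem _ ((show v = _ from hh) ▸ hv)
    · rintro (hh | hh | hh)
      · exact h.notMem _ hh.1
      · have := h.eq_of_lt hh (by omega) (by omega); omega
      · have := h.eq_of_lt hh (by omega) (by omega); omega
    · have key : ∀ j, ∃ x ∈ H \ {v}, G.Adj (c j) x := fun j => by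
        obtain ⟨w, hw, hne, hwa⟩ := h.exists_nbr_ne j v
        exact ⟨w, ⟨hw, hne⟩, hwa.symm⟩
      rintro y (rfl | rfl)
      exacts [key _, key _]
    · rw [Set.ncard_union_eq, Set.ncard_pair, Set.ncard_sdiff_singleton_of_mem hv]
      · omega
      · intro hh
        have := h.eq_of_lt hh (by omega) (by omega); omega
      · rw [Set.disjoint_left]
        rintro x hx (rfl | rfl)
        exacts [h.notMem _ hx.1, h.notMem _ hx.1]

theorem unique_label (h : CycleSetup G H c s) (hno : ¬ HasConsecCycles G 4) (hv : v ∈ H)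
    (hc : Conn G (H \ {v})) (hi : G.Adj v (c i)) (hj : G.Adj v (c j)) : c i = c j := by
  obtain ⟨d, hd, he⟩ := h.exists_add i j
  rw [he] at hj ⊢
  by_contra hne
  rcases Nat.even_or_odd d with hev | hodd
  · have e : i + d + (2 * s + 1 - d : ℕ) = i + (2 * s + 1 : ℕ) := by omega
    have hd0 : d ≠ 0 := by rintro rfl; simp at hne
    refine h.unique_label_odd hno hv hc hj (d := 2 * s + 1 - d) ?_ ?_ (by omega)
    · rwa [e, h.per]
    · rw [Nat.odd_sub hd.le]; simp [hev]
  · exact h.unique_label_odd hno hv hc hi hj hodd hd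

end CycleSetup

/-- A connected piece `D` of `H` attached to the rest at `b`, with antipodal attachments `c x`
of `D` and `c (x + s)` of the rest. -/
structure Leaf (G : SimpleGraph V) (H : Set V) (c : ℤ → V) (s : ℕ) (b : V) (D : Set V)
    (i : ℤ) : Prop where
  bH : b ∈ H
  sub : D ⊆ H \ {b}
  conn : Conn G D
  closed : ClosedIn G D (H \ {b})
  connCompl : Conn G (H \ D)
  connDel : ∀ t ∈ D, Conn G (H \ {t})
  exD : ∃ a ∈ D, G.Adj a (c i)
  exCompl : ∃ w ∈ H \ D, G.Adj w (c (i + s))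

variable [Finite V]

theorem CycleSetup.exists_leaf (h : CycleSetup G H c s) : ∃ b D i, Leaf G H c s b D i := by
  by_cases hcut : ∀ t ∈ H, Conn G (H \ {t})
  · obtain ⟨b, hb, -, hba⟩ := h.exists_nbr_ne (0 + (s : ℤ)) (c 0)
    have hb' : H \ (H \ {b}) = {b} := by
      rw [Set.sdiff_sdiff_right_self]; simpa using hb
    obtain ⟨a, ha, hne, haa⟩ := h.exists_nbr_ne 0 b
    refine ⟨b, H \ {b}, 0, hb, subset_rfl, hcut b hb, fun u hu v hv _ => hv, ?_,
      fun t ht => hcut t ht.1, ⟨a, ⟨ha, hne⟩, haa⟩, ⟨b, ⟨hb, fun h => h.2 rfl⟩, hba⟩⟩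
    rw [hb']
    exact conn_singleton
  · push Not at hcut
    obtain ⟨t, htH, ht⟩ := hcut
    let P : Set (Set V) := {D | D.Nonempty ∧ ∃ b ∈ H, D ⊆ H \ {b} ∧ D ≠ H \ {b} ∧
      ClosedIn G D (H \ {b})}
    obtain ⟨D, ⟨hDne, b, hb, hDsub, hDne', hDc⟩, hmin⟩ :=
      Set.exists_min_image P Set.ncard (Set.toFinite _) (by
        unfold Conn at ht
        push Not at ht
        obtain ⟨T, hT, hne, hc, hT'⟩ := ht
        exact ⟨T, hne, t, htH, hT, hT', hc⟩)
    have hDconn : Conn G D := fun T hT hne hc => by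
      have : T ∈ P := ⟨hne, b, hb, hT.trans hDsub, fun he => hDne' (hDsub.antisymm (he ▸ hT)),
        fun u hu v hv ha => hc u hu v (hDc u (hT hu) v hv ha) ha⟩
      exact Set.eq_of_subset_of_ncard_le hT (hmin T this)
    have hbD : b ∉ D := fun h => (hDsub h).2 rfl
    have hcompl : Conn G (H \ D) := h.conn.sdiff hb hDsub hDc
    have hdel : ∀ t ∈ D, Conn G (H \ {t}) := fun t ht => by
      refine conn_of_forall_mem (p := b) fun T hT hne hc => ?_
      by_contra hbT
      have hTD : T ⊆ D := by
        intro x hx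
        by_contra hxD
        have : T \ D = H \ D := hcompl _ (fun y hy => ⟨(hT hy.1).1, hy.2⟩) ⟨x, hx, hxD⟩
          fun u hu v hv ha => ⟨hc u hu.1 v ⟨hv.1, fun hvt => hv.2 ((show v = t from hvt) ▸ ht)⟩ ha,
            hv.2⟩
        exact hbT (this.symm.subset ⟨hb, hbD⟩).1
      have hTP : T ∈ P := ⟨hne, t, (hDsub ht).1, hT,
        fun he => hbT (he ▸ ⟨hb, fun hbt => hbD ((show b = t from hbt) ▸ ht)⟩), hc⟩
      have := hmin T hTP
      have := Set.ncard_lt_ncard (⟨hTD, fun h => (hT (h ht)).2 rfl⟩ : T ⊂ D) (Set.toFinite _)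
      omega
    obtain ⟨w, hw, hwD⟩ : ∃ w ∈ H \ {b}, w ∉ D := by
      by_contra hcon
      push Not at hcon
      exact hDne' (hDsub.antisymm hcon)
    obtain ⟨i, h1, h2⟩ : ∃ i, (∃ a ∈ D, G.Adj a (c i)) ∧ ∃ w ∈ H \ D, G.Adj w (c (i + s)) := by
      by_contra hcon
      push Not at hcon
      have hstep : ∀ i, (∃ a ∈ D, G.Adj a (c i)) → ∃ a ∈ D, G.Adj a (c (i + s)) := by
        intro i ⟨a, ha, haa⟩
        obtain ⟨y, hy, -, hya⟩ := h.exists_nbr_ne (i + s) b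
        refine ⟨y, ?_, hya⟩
        by_contra hyD
        exact hcon i ⟨a, ha, haa⟩ y ⟨hy, hyD⟩ hya
      obtain ⟨i, hi⟩ : ∃ i, ∃ a ∈ D, G.Adj a (c i) := by
        by_contra hno
        push Not at hno
        refine h.h3.not_sep (Z := {b}) hDne (by simp) (fun u hu v ha => ?_) hwD hw.2
        by_cases hvb : v = b
        · exact .inr hvb
        · by_cases hvH : v ∈ H
          · exact .inl (hDc u hu v ⟨hvH, hvb⟩ ha)
          · obtain ⟨j, rfl⟩ := h.surj v hvH
            exact absurd ha (hno j u hu)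
      have hiter : ∀ k : ℕ, ∃ a ∈ D, G.Adj a (c (i + k * s)) := fun k => by
        induction k with
        | zero => simpa using hi
        | succ k ih =>
          have := hstep _ ih
          have e : i + (k + 1 : ℕ) * (s : ℤ) = i + k * s + s := by push_cast; ring
          rwa [e]
      have hall : ∀ j, ∃ a ∈ D, G.Adj a (c j) := fun j => by
        obtain ⟨d, -, hd⟩ := h.exists_add i j
        obtain ⟨a, ha, haa⟩ := hiter ((2 * s - 1) * d)
        refine ⟨a, ha, ?_⟩
        rw [hd]
        convert haa using 1
        rw [h.inj]
        have hs := h.two_le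
        refine ⟨(1 - s) * d, ?_⟩
        push_cast [show 1 ≤ 2 * s by omega]
        ring
      refine h.h3.not_sep (C := (H \ {b}) \ D) (Z := {b}) (w := hDne.some) ⟨w, hw, hwD⟩ (by simp)
        (fun u hu v ha => ?_) (fun h => h.2 hDne.some_mem) (fun h => (hDsub hDne.some_mem).2 h)
      by_cases hvb : v = b
      · exact .inr hvb
      · by_cases hvH : v ∈ H
        · exact .inl (hDc.sdiff u hu v ⟨hvH, hvb⟩ ha)
        · obtain ⟨j, rfl⟩ := h.surj v hvH
          obtain ⟨a, hb, hba⟩ := hall (j - s)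
          exact absurd (by simpa using ha) (hcon (j - s) ⟨a, hb, hba⟩ u ⟨hu.1.1, hu.2⟩)
    exact ⟨b, D, i, hb, hDsub, hDconn, hDc, hcompl, hdel, h1, h2⟩

end

section

variable {S T K D Q H R X Y : Set V} {a b e p q u v w x y t r u' w' : V} {k l m n d : ℕ} {c : ℤ → V}
  {i j : ℤ} {s : ℕ}

theorem ind_mem_cases (A : Set V) (v : V) : (v ∈ A ∧ ind A v = 1) ∨ (v ∉ A ∧ ind A v = 0) := by
  by_cases h : v ∈ A
  exacts [.inl ⟨h, ind_of_mem h⟩, .inr ⟨h, ind_of_notMem h⟩]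

theorem ncard_inter_singleton_le_ind : (G.neighborSet v ∩ {p}).ncard ≤ ind (G.neighborSet p) v := by
  refine Set.Subsingleton.ncard_le_ind (Set.subsingleton_singleton.anti Set.inter_subset_right) ?_
  rintro ⟨x, hx, rfl⟩
  exact hx.symm

namespace Leaf

theorem b_notMem (L : Leaf G H c s b D i) : b ∉ D := fun h => (L.sub h).2 rfl

theorem subH (L : Leaf G H c s b D i) : insert b D ⊆ H :=
  Set.insert_subset L.bH fun _ h => (L.sub h).1

theorem nbr_mem (L : Leaf G H c s b D i) (hu : u ∈ D) (hv : v ∈ H) (ha : G.Adj u v) :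
    v ∈ insert b D := by
  by_cases h : v = b
  exacts [.inl h, .inr (L.closed u hu v ⟨hv, h⟩ ha)]

theorem conn_sdiff (L : Leaf G H c s b D i) (hR : R ⊆ D) (hc : Conn G (H \ R)) :
    Conn G (insert b D \ R) := by
  have hbR : b ∉ R := fun h => L.b_notMem (hR h)
  have e : insert b D \ R = (H \ R) \ (H \ insert b D) := by
    ext x
    exact ⟨fun hx => ⟨⟨L.subH hx.1, hx.2⟩, fun hx' => hx'.2 hx.1⟩,
      fun hx => ⟨by_contra fun hx' => hx.2 ⟨hx.1.1, hx'⟩, hx.1.2⟩⟩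
  rw [e]
  refine hc.sdiff (t := b) ⟨L.bH, hbR⟩ ?_ ?_
  · intro x hx
    exact ⟨⟨hx.1, fun h => hx.2 (.inr (hR h))⟩, fun h => hx.2 (.inl h)⟩
  · rintro u hu v hv ha
    refine ⟨hv.1.1, ?_⟩
    rintro (rfl | h)
    exacts [hv.2 rfl, hu.2 (L.nbr_mem h hu.1 ha.symm)]

theorem conn_del (L : Leaf G H c s b D i) (ht : t ∈ insert b D) :
    Conn G (insert b D \ {t}) := by
  rcases ht with rfl | ht
  · rw [Set.insert_sdiff_self_of_notMem L.b_notMem]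
    exact L.conn
  · exact L.conn_sdiff (by simpa using ht) (L.connDel t ht)

theorem subset_of_closed (L : Leaf G H c s b D i) (hR : R ⊆ D) (hT : T ⊆ H \ R)
    (hc : ClosedIn G T (H \ R)) (hb : b ∉ T) : T ⊆ D := by
  intro x hx
  by_contra hxD
  have : T \ D = H \ D := L.connCompl _ (fun y hy => ⟨(hT hy.1).1, hy.2⟩) ⟨x, hx, hxD⟩
    fun u hu v hv ha => ⟨hc u hu.1 v ⟨hv.1, fun hvt => hv.2 (hR hvt)⟩ ha, hv.2⟩
  exact hb (this.symm.subset ⟨L.bH, L.b_notMem⟩).1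

theorem b_adj (L : Leaf G H c s b D i) (h : CycleSetup G H c s) : ∃ x ∈ D, G.Adj b x := by
  obtain ⟨a, ha, -⟩ := L.exD
  obtain ⟨r, hr, x, hx, hrx⟩ := h.conn.exists_adj (R := {b}) ⟨b, rfl, L.bH⟩ L.sub L.closed ⟨a, ha⟩
  exact ⟨x, hx, (show r = b from hr.1) ▸ hrx⟩

theorem anchored (L : Leaf G H c s b D i) (hp : p ∈ D) (hK : K ⊆ insert b D \ {p, q})
    (hc : ClosedIn G K (insert b D \ {p, q})) (ht : t ∈ K) :
    ∀ T ⊆ K \ {t}, T.Nonempty → ClosedIn G T (K \ {t}) → ∃ x ∈ T, G.Adj p x ∨ G.Adj q x := by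
  intro T hT hne hTc
  obtain ⟨r, hr, x, hx, hrx⟩ := (L.conn_del (hK ht).1).exists_adj (R := {p, q}) (K := T)
    ⟨p, .inl rfl, .inr hp, fun h => (hK ht).2 (.inl h.symm)⟩
    (fun x hx => ⟨⟨(hK (hT hx).1).1, (hT hx).2⟩, (hK (hT hx).1).2⟩)
    (fun u hu v hv ha => hTc u hu v ⟨hc u (hT hu).1 v ⟨hv.1.1, hv.2⟩ ha, hv.1.2⟩ ha) hne
  refine ⟨x, hx, ?_⟩
  rcases hr.1 with rfl | rfl
  exacts [.inl hrx, .inr hrx]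

theorem attached (L : Leaf G H c s b D i) (hp : p ∈ D) (hq : q ∈ D) (hpq : p ≠ q)
    (hK : K ⊆ insert b D \ {p, q}) (hc : ClosedIn G K (insert b D \ {p, q})) (hne : K.Nonempty) :
    ∃ x ∈ K, G.Adj p x := by
  have e : (insert b D \ {q}) \ {p} = insert b D \ {p, q} := by
    rw [Set.sdiff_sdiff, Set.union_comm]; rfl
  obtain ⟨r, hr, x, hx, hrx⟩ := (L.conn_del (.inr hq)).exists_adj (R := {p}) (K := K)
    ⟨p, rfl, .inr hp, hpq⟩ (e ▸ hK) (e ▸ hc) hne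
  exact ⟨x, hx, (show r = p from hr.1) ▸ hrx⟩

end Leaf

variable [Finite V]

theorem ncard_le_cnt (hsub : ∀ x ∈ X, G.Adj v x → x ∈ K ∨ x = p ∨ x = q) :
    (G.neighborSet v ∩ X).ncard ≤ cnt G K (G.neighborSet p) (G.neighborSet q) v := by
  have h1 : G.neighborSet v ∩ X ⊆ G.neighborSet v ∩ K ∪ G.neighborSet v ∩ {p} ∪
      G.neighborSet v ∩ {q} := by
    rintro x ⟨hx, hxX⟩
    rcases hsub x hxX hx with h | h | h
    exacts [.inl (.inl ⟨hx, h⟩), .inl (.inr ⟨hx, h⟩), .inr ⟨hx, h⟩]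
  have h2 := Set.ncard_le_ncard h1 (Set.toFinite _)
  have h3 := Set.ncard_union_le (G.neighborSet v ∩ K ∪ G.neighborSet v ∩ {p})
    (G.neighborSet v ∩ {q})
  have h4 := Set.ncard_union_le (G.neighborSet v ∩ K) (G.neighborSet v ∩ {p})
  have h5 := ncard_inter_singleton_le_ind (G := G) (v := v) (p := p)
  have h6 := ncard_inter_singleton_le_ind (G := G) (v := v) (p := q)
  unfold cnt
  omega

/-- From a linked piece between `p` and `q` one passes to a linked piece between `q` and another
set, provided `p` has a single neighbour in the piece. -/
theorem exists_linkHyp (hQ : LinkHyp G Q (G.neighborSet p) (G.neighborSet q) b) (hb : b ∉ Q)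
    (hp : (G.neighborSet p ∩ Q).Subsingleton) (hY : 2 ≤ (Y ∩ Q).ncard) :
    ∃ S ⊆ Q, ∃ e, LinkHyp G S (G.neighborSet q) Y e := by
  have hc3 : ∀ v ∈ Q, 3 ≤ cnt G Q (G.neighborSet p) (G.neighborSet q) v := fun v hv =>
    hQ.cnt3 v hv fun h => hb (h ▸ hv)
  obtain ⟨p', hp'Q, hp'⟩ := hQ.exA
  let P : Set (Set V) := {T | T ⊆ Q ∧ (∀ x ∈ T, x ∉ G.neighborSet q ∧ x ∉ Y) ∧
    ∃ t ∈ Q, t ∉ T ∧ ClosedIn G T (Q \ {t})}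
  obtain ⟨T, ⟨hTQ, hTA, t, htQ, htT, hTc⟩, hmax⟩ := Set.exists_max_image P Set.ncard
    (Set.toFinite _) ⟨∅, by simp, by simp, p', hp'Q, by simp, fun u hu => absurd hu (by simp)⟩
  have hbig : ∀ T' ∈ P, T ⊆ T' → T' ⊆ T := fun T' hT' hsub => by
    rw [← Set.eq_of_subset_of_ncard_le hsub (hmax T' hT')]
  obtain ⟨e, heQ, heT, hec, hpe, hpe'⟩ : ∃ e ∈ Q, e ∉ T ∧ ClosedIn G T (Q \ {e}) ∧
      (∀ v ∈ Q \ T, v ≠ e → ¬ G.Adj p v) ∧ (T.Nonempty → ∀ v ∈ Q \ T, ¬ G.Adj p v) := by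
    rcases T.eq_empty_or_nonempty with rfl | hne
    · exact ⟨p', hp'Q, by simp, fun u hu => absurd hu (by simp),
        fun v hv hne ha => hne (hp ⟨ha, hv.1⟩ ⟨hp', hp'Q⟩), fun h => absurd h (by simp)⟩
    · have key : ∀ v ∈ Q \ T, ¬ G.Adj p v := fun v hv ha => by
        obtain ⟨x, hx, hx'⟩ := hQ.cut t htQ T
          (fun x hx => ⟨hTQ hx, fun h => htT ((show x = t from h) ▸ hx)⟩) hne hTc
        rcases hx' with hx' | hx'
        · exact hv.2 ((hp ⟨ha, hv.1⟩ ⟨hx', hTQ hx⟩ : v = x) ▸ hx)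
        · exact (hTA x hx).1 hx'
      exact ⟨t, htQ, htT, hTc, fun v hv _ => key v hv, fun _ => key⟩
  have hTS : ∀ v ∈ Q \ T, v ≠ e → G.neighborSet v ∩ T = ∅ := fun v hv hne => by
    rw [Set.eq_empty_iff_forall_notMem]
    exact fun x hx => hv.2 (hec x hx.2 v ⟨hv.1, hne⟩ hx.1.symm)
  have hSconn : Conn G (Q \ T) := hQ.conn.sdiff heQ
    (fun x hx => ⟨hTQ hx, fun h => heT ((show x = e from h) ▸ hx)⟩) hec
  have hYS : Y ∩ Q ⊆ Q \ T := fun x hx => ⟨hx.2, fun h => (hTA x h).2 hx.1⟩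
  have hex : ∀ v, ∃ x ∈ Q \ T, x ∈ Y ∧ x ≠ v := fun v => by
    obtain ⟨x, hx, hne⟩ := Set.exists_ne_of_one_lt_ncard hY v
    exact ⟨x, hYS hx, hx.1, hne⟩
  refine ⟨Q \ T, Set.sdiff_subset, e, hSconn, ?_, ?_, ?_, ?_, ?_, ?_⟩
  · obtain ⟨x, hx, hx'⟩ := hQ.exB
    exact ⟨x, ⟨hx, fun h => (hTA x h).1 hx'⟩, hx'⟩
  · obtain ⟨x, hx, hxY, -⟩ := hex e
    exact ⟨x, hx, hxY⟩
  · intro v hv hne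
    have h1 := hc3 v hv.1
    have h2 := ind_of_notMem (A := G.neighborSet p) (hpe v hv hne)
    have h3 := ncard_split (G := G) (S := Q) (K := T) v
    rw [hTS v hv hne, Set.ncard_empty] at h3
    unfold cnt at *
    omega
  · intro heS
    rcases T.eq_empty_or_nonempty with rfl | hne
    · have h1 := hc3 e heQ
      have h2 := ind_le_one (A := G.neighborSet p) (s := e)
      rw [Set.sdiff_empty]
      unfold cnt at *
      omega
    · by_contra hlt
      have hlt : cnt G (Q \ T) (G.neighborSet q) Y e ≤ 1 := by omega
      obtain ⟨z, hz, -, hze⟩ := hex e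
      have hadj : (G.neighborSet e ∩ (Q \ T)).Nonempty := by
        by_contra hemp
        rw [Set.not_nonempty_iff_eq_empty, Set.eq_empty_iff_forall_notMem] at hemp
        have : {e} = Q \ T := hSconn _ (by simpa using heS) ⟨e, rfl⟩ (by
          rintro u rfl v hv ha
          exact absurd ⟨ha, hv⟩ (hemp v))
        exact hze (this.symm.subset hz)
      have hpos := (Set.ncard_pos (Set.toFinite _)).2 hadj
      obtain ⟨t', hte, htS⟩ := hadj
      have h1 := ind_mem_cases (G.neighborSet q) e
      have h2 := ind_mem_cases Y e
      unfold cnt at hlt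
      have hsub := (Set.ncard_le_one_iff_subsingleton (s := G.neighborSet e ∩ (Q \ T))).1 (by omega)
      have hP : insert e T ∈ P := by
        refine ⟨Set.insert_subset heQ hTQ, ?_, t', htS.1, ?_, ?_⟩
        · rintro x (rfl | hx)
          · exact ⟨by rcases h1 with h1 | h1 <;> [omega; exact h1.1],
              by rcases h2 with h1 | h1 <;> [omega; exact h1.1]⟩
          · exact hTA x hx
        · rintro (rfl | h)
          exacts [G.loopless.irrefl _ hte, htS.2 h]
        · rintro u (rfl | hu) v hv ha
          · refine .inr ?_
            by_contra hvT
            exact hv.2 (hsub ⟨ha, hv.1, hvT⟩ ⟨hte, htS⟩)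
          · by_cases hve : v = e
            exacts [.inl hve, .inr (hec u hu v ⟨hv.1, hve⟩ ha)]
      exact heT (hbig _ hP (Set.subset_insert _ _) (.inl rfl))
  · obtain ⟨z, hz, -, hze⟩ := hex e
    exact ⟨z, hz, hze⟩
  · intro r hr T2 hT2 hne hc
    by_contra hcon
    push Not at hcon
    obtain ⟨x, hx⟩ := hne
    by_cases hcase : T.Nonempty ∧ e ∉ T2
    · obtain ⟨hne, heT2⟩ := hcase
      obtain ⟨z, hz, hz'⟩ := hQ.cut r hr.1 T2 (fun y hy => ⟨(hT2 hy).1.1, (hT2 hy).2⟩) ⟨x, hx⟩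
        fun u hu v hv ha => by
          refine hc u hu v ⟨⟨hv.1, fun hvT => ?_⟩, hv.2⟩ ha
          exact (hT2 hu).1.2 (hec v hvT u ⟨(hT2 hu).1.1, fun h => heT2 (h ▸ hu)⟩ ha.symm)
      rcases hz' with h | h
      exacts [hpe' hne z (hT2 hz).1 h, (hcon z hz).1 h]
    · have hP : T ∪ T2 ∈ P := by
        refine ⟨Set.union_subset hTQ fun y hy => (hT2 hy).1.1, ?_, r, hr.1, ?_, ?_⟩
        · rintro y (hy | hy)
          exacts [hTA y hy, hcon y hy]
        · rintro (h | h)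
          exacts [hr.2 h, (hT2 h).2 rfl]
        · rintro u (hu | hu) v hv ha
          · by_cases hve : v = e
            · refine .inr ?_
              by_contra hv2
              exact hcase ⟨⟨u, hu⟩, hve ▸ hv2⟩
            · exact .inl (hec u hu v ⟨hv.1, hve⟩ ha)
          · by_cases hvT : v ∈ T
            exacts [.inl hvT, .inr (hc u hu v ⟨⟨hv.1, hvT⟩, hv.2⟩ ha)]
      exact (hT2 hx).1.2 (hbig _ hP Set.subset_union_left (.inr hx))

namespace Leaf

theorem four_le (L : Leaf G H c s b D i) (h : CycleSetup G H c s) (hno : ¬ HasConsecCycles G 4)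
    (hu : u ∈ D) : 3 ≤ (G.neighborSet u ∩ insert b D).ncard ∧
      ((G.neighborSet u ∩ insert b D).ncard ≤ 3 → ∃ j, G.Adj u (c j)) := by
  have hsub : G.neighborSet u ⊆ G.neighborSet u ∩ insert b D ∪ G.neighborSet u ∩ Hᶜ := by
    intro x hx
    by_cases hxH : x ∈ H
    exacts [.inl ⟨hx, L.nbr_mem hu hxH hx⟩, .inr ⟨hx, hxH⟩]
  have h1 := Set.ncard_le_ncard hsub (Set.toFinite _)
  have h2 := Set.ncard_union_le (G.neighborSet u ∩ insert b D) (G.neighborSet u ∩ Hᶜ)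
  have h3 := h.hdeg u
  have h4 : (G.neighborSet u ∩ Hᶜ).ncard ≤ 1 := by
    rw [Set.ncard_le_one_iff_subsingleton]
    intro x hx y hy
    obtain ⟨j, rfl⟩ := h.surj x hx.2
    obtain ⟨k, rfl⟩ := h.surj y hy.2
    exact h.unique_label hno (L.sub hu).1 (L.connDel u hu) hx.1 hy.1
  refine ⟨by omega, fun hle => ?_⟩
  obtain ⟨x, hx⟩ := Set.nonempty_of_ncard_pos (S := G.neighborSet u ∩ Hᶜ) (by omega)
  obtain ⟨j, rfl⟩ := h.surj x hx.2
  exact ⟨j, hx.1⟩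

theorem two_le_b (L : Leaf G H c s b D i) (h : CycleSetup G H c s) (hno : ¬ HasConsecCycles G 4) :
    2 ≤ (G.neighborSet b ∩ insert b D).ncard := by
  obtain ⟨x, hx, hbx⟩ := L.b_adj h
  by_contra hlt
  have hsub := (Set.ncard_le_one_iff_subsingleton (s := G.neighborSet b ∩ insert b D)).1 (by omega)
  obtain ⟨y, hy, hyb⟩ := Set.exists_ne_of_one_lt_ncard
    (show 1 < (G.neighborSet x ∩ insert b D).ncard by have := (L.four_le h hno hx).1; omega) b
  have hbm : b ∈ insert b D \ {x} := ⟨.inl rfl, fun e => L.b_notMem ((show b = x from e) ▸ hx)⟩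
  have : {b} = insert b D \ {x} := L.conn_del (.inr hx) _ (by simpa using hbm) ⟨b, rfl⟩ (by
    rintro u rfl v hv ha
    exact absurd (hsub ⟨ha, hv.1⟩ ⟨hbx, .inr hx⟩) hv.2)
  exact hyb (this.symm.subset ⟨hy.2, hy.1.ne'⟩)

theorem linkHyp_pair (L : Leaf G H c s b D i) (h : CycleSetup G H c s)
    (hno : ¬ HasConsecCycles G 4) (hp : p ∈ D) (hq : q ∈ D) (hpq : G.Adj p q)
    (hK : K ⊆ insert b D \ {p, q}) (hc : ClosedIn G K (insert b D \ {p, q})) (hconn : Conn G K)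
    (hne : K.Nonempty) : LinkHyp G K (G.neighborSet p) (G.neighborSet q) b := by
  have hA := L.attached hp hq hpq.ne hK hc hne
  have hB := L.attached hq hp hpq.ne' (Set.pair_comm p q ▸ hK) (Set.pair_comm p q ▸ hc) hne
  have hcnt : ∀ v ∈ K, (G.neighborSet v ∩ insert b D).ncard ≤
      cnt G K (G.neighborSet p) (G.neighborSet q) v := fun v hv => ncard_le_cnt fun x hx ha => by
    by_cases hxp : x = p ∨ x = q
    exacts [.inr hxp, .inl (hc v hv x ⟨hx, hxp⟩ ha)]
  refine ⟨hconn, hA, hB, fun v hv hvb => ?_, fun hb => (L.two_le_b h hno).trans (hcnt b hb), ?_,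
    fun t ht => L.anchored hp hK hc ht⟩
  · exact (L.four_le h hno ((hK hv).1.resolve_left hvb)).1.trans (hcnt v hv)
  · by_contra hcon
    push Not at hcon
    obtain ⟨x, hx, hpx⟩ := hA
    obtain ⟨y, hy, hqy⟩ := hB
    rw [hcon x hx] at hpx
    rw [hcon y hy] at hqy
    exact h.tf p q b hpq hpx hqy

theorem exists_low (L : Leaf G H c s b D i) (h : CycleSetup G H c s)
    (hno : ¬ HasConsecCycles G 4) : ∃ p ∈ D, ∃ q ∈ D, G.Adj p q ∧
      (G.neighborSet p ∩ insert b D).ncard ≤ 3 ∧ (G.neighborSet q ∩ insert b D).ncard ≤ 3 := by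
  obtain ⟨a, ha, haa⟩ := L.exD
  have hcnt : ∀ v ∈ D, (G.neighborSet v ∩ insert b D).ncard ≤
      cnt G D (G.neighborSet (c i)) (G.neighborSet b) v := fun v hv => ncard_le_cnt fun x hx ha =>
    hx.elim (fun h => .inr (.inr h)) .inl
  have hyp : LinkHyp G D (G.neighborSet (c i)) (G.neighborSet b) b := by
    refine ⟨L.conn, ⟨a, ha, haa.symm⟩, L.b_adj h, fun v hv _ =>
      (L.four_le h hno hv).1.trans (hcnt v hv), fun hb => absurd hb L.b_notMem,
      ⟨a, ha, fun hab => L.b_notMem (hab ▸ ha)⟩, fun t ht T hT hne hc => ?_⟩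
    have hbt : b ≠ t := fun e => L.b_notMem (e ▸ ht)
    obtain ⟨r, hr, x, hx, hrx⟩ := (L.conn_del (.inr ht)).exists_adj (R := {b}) (K := T)
      ⟨b, rfl, .inl rfl, hbt⟩
      (fun x hx => ⟨⟨.inr (hT hx).1, (hT hx).2⟩, fun e => L.b_notMem
        ((show x = b from e) ▸ (hT hx).1)⟩)
      (fun u hu v hv ha => hc u hu v ⟨hv.1.1.resolve_left hv.2, hv.1.2⟩ ha)
      hne
    exact ⟨x, hx, .inr ((show r = b from hr.1) ▸ hrx)⟩
  rcases hyp.concl with ⟨n, hn, hn2⟩ | ⟨-, hb | ⟨p, hp, q, hq, hpq, h1, h2, -⟩⟩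
  · obtain ⟨w, hw, hwa⟩ := L.exCompl
    obtain ⟨m, r⟩ := L.connCompl.path ⟨L.bH, L.b_notMem⟩ hw
    have key : ∀ n, Link G D (G.neighborSet (c i)) (G.neighborSet b) n →
        ∃ u, G.Adj u (c i) ∧ PathIn G H u w (n + m + 1) := by
      rintro n ⟨u, hu, v, hv, p⟩
      exact ⟨u, hu.symm, p.append_of_subset r hv.symm Set.disjoint_sdiff_right
        (fun x hx => (L.sub hx).1) Set.sdiff_subset⟩
    obtain ⟨u, hu, P⟩ := key n hn
    obtain ⟨u', hu', P'⟩ := key _ hn2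
    rw [show n + 2 + m + 1 = n + m + 1 + 2 by ring] at P'
    exact (h.not_link hno P P' hu hwa hu' hwa).elim
  · exact absurd hb L.b_notMem
  · exact ⟨p, hp, q, hq, hpq, (hcnt p hp).trans h1, (hcnt q hq).trans h2⟩

end Leaf

end

section

variable {S T K D Q H R X Y : Set V} {a b e p q u v w x y t r u' w' : V} {k l m n d : ℕ} {c : ℤ → V}
  {i j : ℤ} {s : ℕ}

theorem CycleSetup.pair_cycles (h : CycleSetup G H c s) (hp : p ∈ H) (hq : q ∈ H)
    (hpq : G.Adj p q) (hpi : G.Adj p (c i)) (hqi : G.Adj q (c (i + d))) {e : ℕ} (he : 1 ≤ e)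
    (hde : d + 2 * e = 2 * s + 1) (hu : G.Adj p u ∨ G.Adj q u) (hv : G.Adj v (c (i + d + e)))
    (P : PathIn G (H \ {p, q}) u v l) : ∀ x ∈ ({0, 1, d, d + 1} : Set ℕ),
      HasCycleLength G (l + 3 + e + x) := by
  have hv' : G.Adj v (c (i + (d + e : ℕ))) := by rwa [Nat.cast_add, ← add_assoc]
  have key : ∀ x, (∃ l1, (l1 + 2 = l + 3 + x) ∧
      (PathIn G H p v l1 ∨ PathIn G H q v l1)) →
      HasCycleLength G (l + 3 + e + x) ∧ HasCycleLength G (l + 3 + e + x + d) := by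
    rintro x ⟨l1, h1, Q | Q⟩
    · have := h.cycle Q hpi hv' (by omega) (by omega)
      have := h.cycle' Q hpi hv' (n := e) (by omega) (by omega) (by omega)
      rw [show l + 3 + e + x = l1 + e + 2 by omega, show l1 + e + 2 + d = l1 + (d + e) + 2 by ring]
      constructor <;> assumption
    · have := h.cycle Q hqi hv (by omega) (by omega)
      have := h.cycle' Q hqi hv (n := d + e) (by omega) (by omega) (by omega)
      rw [show l + 3 + e + x = l1 + e + 2 by omega, show l1 + e + 2 + d = l1 + (d + e) + 2 by ring]
      constructor <;> assumption
  have hsp : H \ {p, q} ⊆ H \ {p} := Set.sdiff_subset_sdiff_right (by simp)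
  have hsq : H \ {p, q} ⊆ H \ {q} := Set.sdiff_subset_sdiff_right (by simp)
  have e1 : H \ {p, q} ⊆ (H \ {p}) \ {q} := fun x hx => ⟨hsp hx, (hsq hx).2⟩
  have e2 : H \ {p, q} ⊆ (H \ {q}) \ {p} := fun x hx => ⟨hsq hx, (hsp hx).2⟩
  have hP : (PathIn G H p v (l + 1) ∨ PathIn G H q v (l + 1)) ∧
      (PathIn G H p v (l + 1 + 1) ∨ PathIn G H q v (l + 1 + 1)) := by
    rcases hu with hu | hu
    · exact ⟨.inl (.cons hp hu (P.mono hsp)),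
        .inr (.cons hq hpq.symm (.cons ⟨hp, hpq.ne⟩ hu (P.mono e2)))⟩
    · exact ⟨.inr (.cons hq hu (P.mono hsq)),
        .inl (.cons hp hpq (.cons ⟨hq, hpq.ne'⟩ hu (P.mono e1)))⟩
  have h0 := key 0 ⟨l + 1, rfl, hP.1⟩
  have h1 := key 1 ⟨l + 1 + 1, rfl, hP.2⟩
  rintro x (rfl | rfl | rfl | rfl)
  · exact h0.1
  · exact h1.1
  · exact h0.2
  · rw [show l + 3 + e + (d + 1) = l + 3 + e + 1 + d by ring]
    exact h1.2

variable [Finite V]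

namespace Leaf

theorem pair_linkHyp (L : Leaf G H c s b D i) (h : CycleSetup G H c s)
    (hno : ¬ HasConsecCycles G 4) (hp : p ∈ D) (hq : q ∈ D) (hpq : G.Adj p q)
    (hcon : Conn G (H \ {p, q})) (hY : ∃ y ∈ insert b D \ {p, q}, y ∈ Y) :
    LinkHyp G (insert b D \ {p, q}) (G.neighborSet p ∪ G.neighborSet q) Y b := by
  have hR : ({p, q} : Set V) ⊆ D := Set.insert_subset hp (by simpa using hq)
  have hcnt : ∀ v, (G.neighborSet v ∩ insert b D).ncard ≤
      cnt G (insert b D \ {p, q}) (G.neighborSet p ∪ G.neighborSet q) Y v := fun v => by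
    have h1 := ncard_split (G := G) (S := insert b D) (K := {p, q}) v
    have h2 : (G.neighborSet v ∩ {p, q}).ncard ≤
        ind (G.neighborSet p ∪ G.neighborSet q) v := by
      refine Set.Subsingleton.ncard_le_ind ?_ ?_
      · rintro x ⟨hx, rfl | rfl⟩ y ⟨hy, rfl | rfl⟩
        exacts [rfl, absurd hpq (h.tf v _ _ hx hy), absurd hpq (h.tf v _ _ hy hx), rfl]
      · rintro ⟨x, hx, rfl | rfl⟩
        exacts [.inl hx.symm, .inr hx.symm]
    unfold cnt
    omega
  obtain ⟨x, hx, hxb⟩ : ∃ x ∈ G.neighborSet p ∩ (insert b D \ {p, q}), x ≠ b := by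
    refine Set.exists_ne_of_one_lt_ncard ?_ b
    have h1 := (L.four_le h hno hp).1
    have h2 := Set.le_ncard_sdiff {q} (G.neighborSet p ∩ insert b D)
    rw [Set.ncard_singleton] at h2
    refine lt_of_lt_of_le (by omega : 1 < ((G.neighborSet p ∩ insert b D) \ {q}).ncard)
      (Set.ncard_le_ncard ?_ (Set.toFinite _))
    rintro x ⟨⟨h1, h2⟩, h3⟩
    refine ⟨h1, h2, ?_⟩
    rintro (rfl | h)
    exacts [G.loopless.irrefl _ h1, h3 h]
  refine ⟨L.conn_sdiff hR hcon, ⟨x, hx.2, .inl hx.1⟩, hY, fun v hv hvb =>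
    (L.four_le h hno (hv.1.resolve_left hvb)).1.trans (hcnt v),
    fun _ => (L.two_le_b h hno).trans (hcnt b), ⟨x, hx.2, hxb⟩, fun t ht T hT hne hc => ?_⟩
  obtain ⟨y, hy, hy'⟩ := L.anchored hp subset_rfl (fun _ _ v hv _ => hv) ht T hT hne hc
  exact ⟨y, hy, .inl hy'⟩

theorem pair_paths (L : Leaf G H c s b D i) (h : CycleSetup G H c s)
    (hno : ¬ HasConsecCycles G 4) (hp : p ∈ D) (hq : q ∈ D) (hpq : G.Adj p q)
    (hcon : Conn G (H \ {p, q})) (hpj : ¬ G.Adj p (c j)) (hqj : ¬ G.Adj q (c j)) :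
    ∃ l d, (d = 1 ∨ d = 2) ∧ ∀ l' ∈ ({l, l + d} : Set ℕ), ∃ u v, (G.Adj p u ∨ G.Adj q u) ∧
      G.Adj v (c j) ∧ PathIn G (H \ {p, q}) u v l' := by
  have hsub : insert b D \ {p, q} ⊆ H \ {p, q} := Set.sdiff_subset_sdiff_left L.subH
  by_cases hex : ∃ y ∈ insert b D, G.Adj y (c j)
  · obtain ⟨y, hy, hyj⟩ := hex
    have hyS : y ∈ insert b D \ {p, q} := by
      refine ⟨hy, ?_⟩
      rintro (rfl | rfl)
      exacts [hpj hyj, hqj hyj]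
    obtain ⟨l, d, hd, h1, h2⟩ := (L.pair_linkHyp h hno hp hq hpq hcon (Y := G.neighborSet (c j))
      ⟨y, hyS, hyj.symm⟩).exists_link
    refine ⟨l, d, hd, ?_⟩
    rintro l' (rfl | rfl)
    · obtain ⟨u, hu, v, hv, P⟩ := h1
      exact ⟨u, v, hu, hv.symm, P.mono hsub⟩
    · obtain ⟨u, hu, v, hv, P⟩ := h2
      exact ⟨u, v, hu, hv.symm, P.mono hsub⟩
  · push Not at hex
    obtain ⟨w, hw, hwb, hwj⟩ := h.exists_nbr_ne j b
    have hwD : w ∉ D := fun hwD => hex w (.inr hwD) hwj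
    obtain ⟨m, P⟩ := L.connCompl.path ⟨L.bH, L.b_notMem⟩ ⟨hw, hwD⟩
    cases P with
    | nil _ => exact absurd rfl hwb
    | @cons _ _ z _ m _ hbz P =>
      have hbp : b ∉ ({p, q} : Set V) := by
        rintro (rfl | rfl)
        exacts [L.b_notMem hp, L.b_notMem hq]
      have key : ∀ n, Link G (insert b D \ {p, q}) (G.neighborSet p ∪ G.neighborSet q) {b} n →
          ∃ u v, (G.Adj p u ∨ G.Adj q u) ∧ G.Adj v (c j) ∧
            PathIn G (H \ {p, q}) u v (n + m + 1) := by
        rintro n ⟨u, hu, v, rfl, P'⟩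
        refine ⟨u, w, hu, hwj, P'.append_of_subset P hbz ?_ hsub ?_⟩
        · rw [Set.disjoint_left]
          rintro x ⟨rfl | hx, -⟩ ⟨hx1, hx2⟩
          exacts [hx2 rfl, hx1.2 hx]
        · rintro x ⟨⟨hx, hxD⟩, -⟩
          refine ⟨hx, ?_⟩
          rintro (rfl | rfl)
          exacts [hxD hp, hxD hq]
      obtain ⟨l, d, hd, h1, h2⟩ := (L.pair_linkHyp h hno hp hq hpq hcon (Y := {b})
        ⟨b, ⟨.inl rfl, hbp⟩, rfl⟩).exists_link
      refine ⟨l + m + 1, d, hd, ?_⟩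
      rintro l' (rfl | rfl)
      · exact key _ h1
      · rw [show l + m + 1 + d = l + d + m + 1 by ring]
        exact key _ h2

end Leaf

theorem CycleSetup.arc_le_three (h : CycleSetup G H c s) (hp : p ∈ H) (hq : q ∈ H)
    (hpq : G.Adj p q) (hpi : G.Adj p (c i)) (hqi : G.Adj q (c (i + d))) (hd : Odd d)
    (hdn : d < 2 * s + 1) (hcon : Conn G (H \ {p, q})) : d ≤ 3 := by
  by_contra hlt
  have hd5 : 5 ≤ d := by obtain ⟨k, rfl⟩ := hd; omega
  have hnH : ∀ j, ∀ v ∈ H, v ≠ c j := fun j v hv e => h.notMem j (e ▸ hv)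
  have he : i + d + (2 * s + 1 - d : ℕ) = i + (2 * s + 1 : ℕ) := by omega
  let K := (H \ {p, q}) ∪ {c (i + (1 : ℕ)), c (i + (2 : ℕ)), c (i + (3 : ℕ))}
  have hmem : ∀ v ∈ H, v ∈ ({p, q} : Set V) → v ∈ Kᶜ := by
    rintro v hv hvp (hh | hh | hh | hh)
    exacts [hh.2 hvp, hnH _ v hv hh, hnH _ v hv hh, hnH _ v hv hh]
  refine CycleSetup.not_col_even (X := Kᶜ) (p := q) (q := p) (i := i + d) (d := 2 * s + 1 - d)
    h.adj (hmem q hq (.inr rfl)) (hmem p hp (.inl rfl)) hpq.symm hqi (by rwa [he, h.per]) ?_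
    (fun k hk => ?_) (h.max K (hcon.union ?_) ?_)
  · rw [Nat.even_sub' hdn.le]
    simp [hd]
  · have key : ∀ r : ℕ, 1 ≤ r → r ≤ 3 → c (i + d + k) ≠ c (i + r) := fun r h1 h3 hh => by
      by_cases hkn : d + k < 2 * s + 1
      · have := h.eq_of_lt (k := d + k) (l := r) (by rwa [Nat.cast_add, ← add_assoc]) hkn (by omega)
        omega
      · have hk' : k = 2 * s + 1 - d := by omega
        rw [hk', he, h.per] at hh
        have := h.eq_of_lt (k := 0) (l := r) (by simpa using hh) (by omega) (by omega)
        omega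
    rintro (hh | hh | hh | hh)
    exacts [h.notMem _ hh.1, key 1 (by omega) (by omega) hh, key 2 (by omega) (by omega) hh,
      key 3 (by omega) (by omega) hh]
  · have key : ∀ j, ∃ x ∈ H \ {p, q}, G.Adj (c j) x := fun j => by
      by_cases hpj : G.Adj p (c j)
      · obtain ⟨w, hw, hne, hwa⟩ := h.exists_nbr_ne j p
        refine ⟨w, ⟨hw, ?_⟩, hwa.symm⟩
        rintro (rfl | rfl)
        exacts [hne rfl, h.tf _ _ _ hpq hpj hwa]
      · obtain ⟨w, hw, hne, hwa⟩ := h.exists_nbr_ne j q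
        refine ⟨w, ⟨hw, ?_⟩, hwa.symm⟩
        rintro (rfl | rfl)
        exacts [hpj hwa, hne rfl]
    rintro y (rfl | rfl | rfl)
    exacts [key _, key _, key _]
  · have h3 : ({c (i + (1 : ℕ)), c (i + (2 : ℕ)), c (i + (3 : ℕ))} : Set V).ncard = 3 := by
      rw [Set.ncard_eq_three]
      refine ⟨_, _, _, fun hh => ?_, fun hh => ?_, fun hh => ?_, rfl⟩ <;>
      · have := h.eq_of_lt hh (by omega) (by omega)
        omega
    have h2 : ({p, q} : Set V) ⊆ H := Set.insert_subset hp (by simpa using hq)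
    have h4 := Set.ncard_le_ncard h2 (Set.toFinite _)
    rw [Set.ncard_union_eq, h3, Set.ncard_sdiff h2 (Set.toFinite _)]
    · rw [Set.ncard_pair hpq.ne] at *
      omega
    · rw [Set.disjoint_left]
      rintro x hx (rfl | rfl | rfl)
      exacts [h.notMem _ hx.1, h.notMem _ hx.1, h.notMem _ hx.1]

namespace Leaf

theorem not_conn_sdiff_odd (L : Leaf G H c s b D j) (h : CycleSetup G H c s)
    (hno : ¬ HasConsecCycles G 4) (hp : p ∈ D) (hq : q ∈ D) (hpq : G.Adj p q)
    (hpi : G.Adj p (c i)) (hqi : G.Adj q (c (i + d))) (hd : Odd d) (hdn : d < 2 * s + 1)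
    (hcon : Conn G (H \ {p, q})) : False := by
  have hpH := (L.sub hp).1
  have hqH := (L.sub hq).1
  have hd3 := h.arc_le_three hpH hqH hpq hpi hqi hd hdn hcon
  have hs := h.two_le
  obtain ⟨e, he⟩ : ∃ e, d + 2 * e = 2 * s + 1 := by
    obtain ⟨k, rfl⟩ := hd
    exact ⟨s - k, by omega⟩
  have hpe : ¬ G.Adj p (c (i + d + e)) := fun ha => by
    have := h.unique_label hno hpH (L.connDel p hp) hpi ha
    have := h.eq_of_lt (k := 0) (l := d + e) (by simpa [add_assoc] using this) (by omega) (by omega)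
    obtain ⟨k, rfl⟩ := hd
    omega
  have hqe : ¬ G.Adj q (c (i + d + e)) := fun ha => by
    have := h.unique_label hno hqH (L.connDel q hq) hqi ha
    have := h.eq_of_lt (i := i + d) (k := 0) (l := e) (by simpa using this) (by omega) (by omega)
    omega
  obtain ⟨l, δ, hδ, hl⟩ := L.pair_paths h hno hp hq hpq hcon hpe hqe
  have key : ∀ l' ∈ ({l, l + δ} : Set ℕ), ∀ x ∈ ({0, 1, d, d + 1} : Set ℕ),
      HasCycleLength G (l' + 3 + e + x) := fun l' hl' => by
    obtain ⟨u, v, hu, hv, P⟩ := hl l' hl'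
    exact h.pair_cycles hpH hqH hpq hpi hqi (by omega) he hu hv P
  have k0 := key l (.inl rfl)
  have k1 := key (l + δ) (.inr rfl)
  refine hno (hasConsecCycles_four (l + 3 + e) (k0 0 (by simp)) (k0 1 (by simp)) ?_ ?_)
  · rcases hδ with rfl | rfl
    · simpa [add_assoc, add_comm, add_left_comm] using k1 1 (by simp)
    · simpa [add_assoc, add_comm, add_left_comm] using k1 0 (by simp)
  · obtain rfl | rfl : d = 1 ∨ d = 3 := by obtain ⟨k, rfl⟩ := hd; omega
    · rcases hδ with rfl | rfl
      · have := k1 2 (by simp)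
        rwa [show l + 1 + 3 + e + 2 = l + 3 + e + 3 by ring] at this
      · have := k1 1 (by simp)
        rwa [show l + 2 + 3 + e + 1 = l + 3 + e + 3 by ring] at this
    · exact k0 3 (by simp)

theorem not_conn_sdiff (L : Leaf G H c s b D j) (h : CycleSetup G H c s)
    (hno : ¬ HasConsecCycles G 4) (hp : p ∈ D) (hq : q ∈ D) (hpq : G.Adj p q)
    (hp3 : (G.neighborSet p ∩ insert b D).ncard ≤ 3)
    (hq3 : (G.neighborSet q ∩ insert b D).ncard ≤ 3) : ¬ Conn G (H \ {p, q}) := by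
  intro hcon
  obtain ⟨i, hpi⟩ := (L.four_le h hno hp).2 hp3
  obtain ⟨k, hqk⟩ := (L.four_le h hno hq).2 hq3
  obtain ⟨d, hdn, hd⟩ := h.exists_add i k
  rw [hd] at hqk
  rcases Nat.even_or_odd d with hev | hodd
  · have e : i + d + (2 * s + 1 - d : ℕ) = i + (2 * s + 1 : ℕ) := by omega
    have hd0 : d ≠ 0 := by
      rintro rfl
      exact h.tf p q (c i) hpq hpi (by simpa using hqk)
    refine L.not_conn_sdiff_odd h hno hq hp hpq.symm (i := i + d) (d := 2 * s + 1 - d) hqk ?_ ?_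
      (by omega) (Set.pair_comm p q ▸ hcon)
    · rwa [e, h.per]
    · rw [Nat.odd_sub hdn.le]; simp [hev]
  · exact L.not_conn_sdiff_odd h hno hp hq hpq hpi hqk hodd hdn hcon

theorem elim_false (L : Leaf G H c s b D j) (h : CycleSetup G H c s)
    (hno : ¬ HasConsecCycles G 4) : False := by
  obtain ⟨p, hp, q, hq, hpq, hp3, hq3⟩ := L.exists_low h hno
  have hpH := (L.sub hp).1
  have hqH := (L.sub hq).1
  have hncon := L.not_conn_sdiff h hno hp hq hpq hp3 hq3
  have hR : ({p, q} : Set V) ⊆ D := Set.insert_subset hp (by simpa using hq)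
  have hbR : b ∉ ({p, q} : Set V) := fun hb => L.b_notMem (hR hb)
  -- a component of `H \ {p, q}` that misses `b`
  obtain ⟨Q, hQsub, ⟨z, hz⟩, hQconn, hQc, hbQ⟩ : ∃ Q ⊆ H \ {p, q}, Q.Nonempty ∧ Conn G Q ∧
      ClosedIn G Q (H \ {p, q}) ∧ b ∉ Q := by
    by_contra hcon'
    refine hncon (conn_of_forall_mem (p := b) fun T hT ⟨x, hx⟩ hc => ?_)
    by_contra hbT
    exact hcon' ⟨comp G (H \ {p, q}) x, comp_subset, ⟨x, mem_comp_self (hT hx)⟩, comp_conn,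
      comp_closed, fun ⟨n, P⟩ => hbT (hc.path P subset_rfl hx)⟩
  have hQD : Q ⊆ D := L.subset_of_closed hR hQsub hQc hbQ
  have hsub : insert b D \ {p, q} ⊆ H \ {p, q} := Set.sdiff_subset_sdiff_left L.subH
  have hQsub' : Q ⊆ insert b D \ {p, q} := fun x hx => ⟨.inr (hQD hx), (hQsub hx).2⟩
  have hQc' : ClosedIn G Q (insert b D \ {p, q}) := fun u hu v hv => hQc u hu v (hsub hv)
  have hQL := L.linkHyp_pair h hno hp hq hpq hQsub' hQc' hQconn ⟨z, hz⟩
  have hpQ : p ∉ Q := fun h => (hQsub h).2 (.inl rfl)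
  have hqQ : q ∉ Q := fun h => (hQsub h).2 (.inr rfl)
  obtain ⟨i, hpi⟩ := (L.four_le h hno hp).2 hp3
  have hs := h.two_le
  have hpi' : ¬ G.Adj p (c (i + s)) := fun ha => by
    have := h.unique_label hno hpH (L.connDel p hp) hpi ha
    have := h.eq_of_lt (k := 0) (l := s) (by simpa using this) (by omega) (by omega)
    omega
  -- the piece around `b`
  let W := comp G (insert b D \ {p, q}) b
  have hbW : b ∈ W := mem_comp_self ⟨.inl rfl, hbR⟩
  have hWsub : W ⊆ insert b D \ {p, q} := comp_subset
  have hWQ : Disjoint W Q := by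
    rw [Set.disjoint_left]
    rintro x ⟨n, P⟩ hx
    exact hbQ (hQc'.path P.symm subset_rfl hx)
  have hWL := L.linkHyp_pair h hno hp hq hpq hWsub comp_closed comp_conn ⟨b, hbW⟩
  obtain ⟨ω, δ, hδ, hω, hω'⟩ := hWL.exists_link
  rcases hQL.concl with ⟨n, hn, hn2⟩ | ⟨-, hb | ⟨p3, hp3Q, q3, hq3Q, hpq3, h1, h2, hanch⟩⟩
  · by_cases hw : ∃ w ∈ H \ Q, G.Adj w (c (i + s))
    · obtain ⟨w, hw, hwa⟩ := hw
      have hconn : Conn G ((H \ {p}) \ Q) := (L.connDel p hp).sdiff ⟨hqH, hpq.ne'⟩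
        (fun x hx => ⟨⟨(hQsub hx).1, fun e => hpQ ((show x = p from e) ▸ hx)⟩,
          fun e => hqQ ((show x = q from e) ▸ hx)⟩)
        fun u hu v hv ha => hQc u hu v ⟨hv.1.1, by
          rintro (e | e)
          exacts [hv.1.2 e, hv.2 e]⟩ ha
      have hwp : w ≠ p := fun e => hpi' (e ▸ hwa)
      obtain ⟨m, P⟩ := hconn.path ⟨⟨hqH, hpq.ne'⟩, hqQ⟩ (⟨⟨hw.1, hwp⟩, hw.2⟩ : w ∈ (H \ {p}) \ Q)
      have key : ∀ n, Link G Q (G.neighborSet p) (G.neighborSet q) n →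
          PathIn G H p w (n + m + 1 + 1) := by
        rintro n ⟨u, hu, v, hv, P'⟩
        refine .cons hpH hu (P'.append_of_subset P hv.symm Set.disjoint_sdiff_right
          (fun x hx => ⟨(hQsub hx).1, fun e => hpQ ((show x = p from e) ▸ hx)⟩)
          Set.sdiff_subset)
      have P2 := key _ hn2
      rw [show n + 2 + m + 1 + 1 = n + m + 1 + 1 + 2 by ring] at P2
      exact h.not_link hno (key n hn) P2 hpi hwa hpi hwa
    · push Not at hw
      have hY : 2 ≤ (G.neighborSet (c (i + s)) ∩ Q).ncard := by
        refine (h.two_le_nbrs (i + s)).trans (Set.ncard_le_ncard ?_ (Set.toFinite _))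
        exact fun x hx => ⟨hx.1, by_contra fun hxQ => hw x ⟨hx.2, hxQ⟩ hx.1.symm⟩
      have hpsub : (G.neighborSet p ∩ Q).Subsingleton := by
        rw [← Set.ncard_le_one_iff_subsingleton]
        obtain ⟨x, hx, hxp⟩ := hWL.exA
        have hsub' : G.neighborSet p ∩ Q ⊆ (G.neighborSet p ∩ insert b D) \ {q, x} := by
          rintro y ⟨hy, hyQ⟩
          refine ⟨⟨hy, .inr (hQD hyQ)⟩, ?_⟩
          rintro (rfl | rfl)
          exacts [hqQ hyQ, Set.disjoint_left.1 hWQ hx hyQ]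
        have hle := Set.ncard_le_ncard hsub' (Set.toFinite _)
        have hqx : q ≠ x := fun e => (hWsub hx).2 (.inr e.symm)
        have hin : ({q, x} : Set V) ⊆ G.neighborSet p ∩ insert b D :=
          Set.insert_subset ⟨hpq, .inr hq⟩ (Set.singleton_subset_iff.2 ⟨hxp, (hWsub hx).1⟩)
        rw [Set.ncard_sdiff hin (Set.toFinite _), Set.ncard_pair hqx] at hle
        omega
      obtain ⟨S, hSQ, e, hSL⟩ := exists_linkHyp hQL hbQ hpsub hY
      obtain ⟨l, δ', hδ', hl, hl'⟩ := hSL.exists_link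
      have key : ∀ m n, Link G W (G.neighborSet p) (G.neighborSet q) m →
          Link G S (G.neighborSet q) (G.neighborSet (c (i + s))) n →
          ∃ w, G.Adj w (c (i + s)) ∧ PathIn G H p w (m + (n + 1) + 1 + 1) := by
        rintro m n ⟨u, hu, v, hv, P⟩ ⟨u', hu', w, hw, P'⟩
        have hSq : S ⊆ (H \ {p}) \ {q} := fun x hx => ⟨⟨(hQsub (hSQ hx)).1,
          fun e => hpQ ((show x = p from e) ▸ hSQ hx)⟩,
          fun e => hqQ ((show x = q from e) ▸ hSQ hx)⟩
        have P2 : PathIn G (insert q S) q w (n + 1) := .cons (.inl rfl) hu' (P'.mono fun x hx =>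
          ⟨.inr hx, (hSq hx).2⟩)
        refine ⟨w, hw.symm, .cons hpH hu (P.append_of_subset P2 hv.symm ?_ ?_ ?_)⟩
        · rw [Set.disjoint_left]
          rintro x hx (rfl | hxS)
          exacts [(hWsub hx).2 (.inr rfl), Set.disjoint_left.1 hWQ hx (hSQ hxS)]
        · exact fun x hx => ⟨(hsub (hWsub hx)).1, fun e => (hWsub hx).2 (.inl e)⟩
        · exact Set.insert_subset ⟨hqH, hpq.ne'⟩ fun x hx => (hSq hx).1
      have fin : ∀ m n m' n', Link G W (G.neighborSet p) (G.neighborSet q) m →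
          Link G S (G.neighborSet q) (G.neighborSet (c (i + s))) n →
          Link G W (G.neighborSet p) (G.neighborSet q) m' →
          Link G S (G.neighborSet q) (G.neighborSet (c (i + s))) n' → m' + n' = m + n + 2 →
          False := by
        intro m n m' n' a1 a2 a3 a4 hmn
        obtain ⟨w, hw, P⟩ := key m n a1 a2
        obtain ⟨w', hw', P'⟩ := key m' n' a3 a4
        rw [show m' + (n' + 1) + 1 + 1 = m + (n + 1) + 1 + 1 + 2 by omega] at P'
        exact h.not_link hno P P' hpi hw hpi hw'
      rcases hδ with rfl | rfl
      · rcases hδ' with rfl | rfl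
        · exact fin _ _ _ _ hω hl hω' hl' (by omega)
        · exact fin _ _ _ _ hω hl hω hl' (by omega)
      · exact fin _ _ _ _ hω hl hω' hl (by omega)
  · exact hbQ hb
  · have hcnt : ∀ v ∈ Q, (G.neighborSet v ∩ insert b D).ncard ≤
        cnt G Q (G.neighborSet p) (G.neighborSet q) v := fun v hv => ncard_le_cnt fun x hx ha => by
      by_cases hxp : x = p ∨ x = q
      exacts [.inr hxp, .inl (hQc' v hv x ⟨hx, hxp⟩ ha)]
    refine L.not_conn_sdiff h hno (hQD hp3Q) (hQD hq3Q) hpq3 ((hcnt _ hp3Q).trans h1)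
      ((hcnt _ hq3Q).trans h2) ?_
    have hRQ : ({p3, q3} : Set V) ⊆ Q := Set.insert_subset hp3Q (by simpa using hq3Q)
    refine conn_of_forall_mem (p := p) fun T hT ⟨x, hx⟩ hc => ?_
    by_cases hTQ : (T ∩ Q).Nonempty
    · obtain ⟨y, hy, hy'⟩ := hanch (T ∩ Q) (fun y hy => ⟨hy.2, (hT hy.1).2⟩) hTQ
        fun u hu v hv ha => ⟨hc u hu.1 v ⟨(hQsub hv.1).1, hv.2⟩ ha, hv.1⟩
      have hpS : p ∈ H \ {p3, q3} := ⟨hpH, fun e => hpQ (hRQ e)⟩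
      have hqS : q ∈ H \ {p3, q3} := ⟨hqH, fun e => hqQ (hRQ e)⟩
      rcases hy' with hy' | hy'
      · exact hc y hy.1 p hpS hy'.symm
      · exact hc q (hc y hy.1 q hqS hy'.symm) p hpS hpq.symm
    · have hTQ' : T ⊆ H \ Q := fun y hy => ⟨(hT hy).1, fun hyQ => hTQ ⟨y, hy, hyQ⟩⟩
      have : T = H \ Q := (h.conn.sdiff_pair hpH hqH hpq hQsub hQc) T hTQ' ⟨x, hx⟩
        fun u hu v hv ha => hc u hu v ⟨hv.1, fun e => hv.2 (hRQ e)⟩ ha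
      rw [this]
      exact ⟨hpH, hpQ⟩

end Leaf

end

end

/-- Every 3-connected nonbipartite graph of minimum degree at least 4 and order at
least 6 contains 4 cycles of consecutive lengths. -/
theorem consec_cycles_4 {V : Type*} [Fintype V] (G : SimpleGraph V)
    (h3 : KConnected G 3) (hnb : ¬ G.Colorable 2)
    (hdeg : ∀ v, 4 ≤ (G.neighborSet v).ncard) (hcard : 6 ≤ Nat.card V) :
    HasConsecCycles G 4 := by
  by_contra hno
  have tf : ∀ x y z, G.Adj x y → G.Adj x z → ¬ G.Adj y z := fun _ _ _ hxy hxz hyz =>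
    hno (hasConsecCycles_of_triangle h3 hdeg hcard hxy hxz hyz)
  obtain ⟨H, c, s, h⟩ := exists_cycleSetup tf h3 hdeg hnb
  obtain ⟨b, D, i, L⟩ := h.exists_leaf
  exact L.elim_false h hno
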